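/- arXiv:1710.02969 — 13 statements merged into one kernel-verified Lean document; each statement's English description precedes it below -/
import Mathlib

section
/- Let M be a conformal bimodule over the associative conformal algebra Cend_{1,x}. Then H²(Cend_{1,x}, M) = 0; that is, every 2-cocycle of Cend_{1,x} with values in M is a 2-coboundary. -/
open Finset

/-- An associative conformal algebra over a field `F` of characteristic zero:
a left `F[D]`-module `A` (the action of `D` is recorded by the linear map `D`)
equipped with `F`-bilinear products `∘ₙ`, `n ∈ ℤ₊`, satisfying locality,
the `D`-rules and the conformal associativity axiom. -/
structure ConfAlg (F : Type*) [Field F] (A : Type*) [AddCommGroup A] [Module F A] where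
  D : A →ₗ[F] A
  mul : ℕ → A →ₗ[F] A →ₗ[F] A
  locality : ∀ a b : A, ∃ N : ℕ, ∀ n, N ≤ n → mul n a b = 0
  D_left : ∀ (n : ℕ) (a b : A), mul n (D a) b = -((n : F) • mul (n - 1) a b)
  D_right : ∀ (n : ℕ) (a b : A),
    mul n a (D b) = D (mul n a b) + (n : F) • mul (n - 1) a b
  assoc : ∀ (n m : ℕ) (a b c : A),
    mul m (mul n a b) c =
      ∑ s ∈ Finset.range (n + 1),
        ((-1 : F) ^ s * (n.choose s : F)) • mul (n - s) a (mul (m + s) b c)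

/-- `A`, with conformal structure `CA`, is (a copy of) the conformal algebra
`Cend_{1,x}`: the family `xB k = x^k`, `k ≥ 1`, together with all its
`D`-derivatives `D^i x^k`, is a free generating family (i.e. `{x^k : k ≥ 1}` is a
basis of `A` as a free `F[D]`-module) and the products on the basis are
`x^k ∘ₙ x^l = l(l-1)⋯(l-n+1) x^{k+l-n}` (zero for `n > l`). -/
def IsCend1x {F : Type*} [Field F] {A : Type*} [AddCommGroup A] [Module F A]
    (CA : ConfAlg F A) (xB : ℕ → A) : Prop :=
  (LinearIndependent F fun p : ℕ × {k : ℕ // 1 ≤ k} => (CA.D ^ p.1) (xB p.2.1)) ∧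
  (Submodule.span F (Set.range fun p : ℕ × {k : ℕ // 1 ≤ k} => (CA.D ^ p.1) (xB p.2.1)) = ⊤) ∧
  ∀ (k l n : ℕ), 1 ≤ k → 1 ≤ l →
    CA.mul n (xB k) (xB l) = (l.descFactorial n : F) • xB (k + l - n)

/-- A conformal bimodule `M` over the associative conformal algebra `(A, CA)`. -/
structure ConfBimod {F : Type*} [Field F] {A : Type*} [AddCommGroup A] [Module F A]
    (CA : ConfAlg F A) (M : Type*) [AddCommGroup M] [Module F M] where
  D : M →ₗ[F] M
  lmul : ℕ → A →ₗ[F] M →ₗ[F] M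
  rmul : ℕ → M →ₗ[F] A →ₗ[F] M
  loc_left : ∀ (a : A) (u : M), ∃ N : ℕ, ∀ n, N ≤ n → lmul n a u = 0
  loc_right : ∀ (u : M) (a : A), ∃ N : ℕ, ∀ n, N ≤ n → rmul n u a = 0
  D_la : ∀ (n : ℕ) (a : A) (u : M), lmul n (CA.D a) u = -((n : F) • lmul (n - 1) a u)
  D_lu : ∀ (n : ℕ) (a : A) (u : M),
    lmul n a (D u) = D (lmul n a u) + (n : F) • lmul (n - 1) a u
  D_ru : ∀ (n : ℕ) (u : M) (a : A), rmul n (D u) a = -((n : F) • rmul (n - 1) u a)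
  D_ra : ∀ (n : ℕ) (u : M) (a : A),
    rmul n u (CA.D a) = D (rmul n u a) + (n : F) • rmul (n - 1) u a
  assoc_aau : ∀ (m n : ℕ) (a b : A) (u : M),
    lmul n (CA.mul m a b) u =
      ∑ s ∈ Finset.range (m + 1),
        ((-1 : F) ^ s * (m.choose s : F)) • lmul (m - s) a (lmul (n + s) b u)
  assoc_uaa : ∀ (m n : ℕ) (u : M) (a b : A),
    rmul n (rmul m u a) b =
      ∑ s ∈ Finset.range (m + 1),
        ((-1 : F) ^ s * (m.choose s : F)) • rmul (m - s) u (CA.mul (n + s) a b)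
  assoc_aua : ∀ (m n : ℕ) (a : A) (u : M) (b : A),
    rmul n (lmul m a u) b =
      ∑ s ∈ Finset.range (m + 1),
        ((-1 : F) ^ s * (m.choose s : F)) • lmul (m - s) a (rmul (n + s) u b)

/-- A 2-cochain of a conformal algebra `(A, CA)` with coefficients in the
conformal bimodule `(M, B)`: a family of `F`-bilinear maps `f s : A × A → M`
satisfying the `D`-rules and locality. -/
structure Cochain2 {F : Type*} [Field F] {A : Type*} [AddCommGroup A] [Module F A]
    {M : Type*} [AddCommGroup M] [Module F M]
    (CA : ConfAlg F A) (B : ConfBimod CA M) where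
  f : ℕ → A →ₗ[F] A →ₗ[F] M
  D_left : ∀ (s : ℕ) (a b : A), f s (CA.D a) b = -((s : F) • f (s - 1) a b)
  D_right : ∀ (s : ℕ) (a b : A),
    f s a (CA.D b) = B.D (f s a b) + (s : F) • f (s - 1) a b
  loc : ∀ a b : A, ∃ N : ℕ, ∀ s, N ≤ s → f s a b = 0

/-- The 2-cocycle condition. -/
def IsCocycle {F : Type*} [Field F] {A : Type*} [AddCommGroup A] [Module F A]
    {M : Type*} [AddCommGroup M] [Module F M]
    {CA : ConfAlg F A} {B : ConfBimod CA M} (φ : Cochain2 CA B) : Prop :=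
  ∀ (n m : ℕ) (a b c : A),
    B.lmul n a (φ.f m b c) + φ.f n a (CA.mul m b c) =
      ∑ s ∈ Finset.range (n + 1), (n.choose s : F) •
        (φ.f (m + s) (CA.mul (n - s) a b) c + B.rmul (m + s) (φ.f (n - s) a b) c)

/-- `φ` is a 2-coboundary: `φ = δτ` for some `H`-linear 1-cochain `τ : A → M`. -/
def IsCoboundary {F : Type*} [Field F] {A : Type*} [AddCommGroup A] [Module F A]
    {M : Type*} [AddCommGroup M] [Module F M]
    {CA : ConfAlg F A} {B : ConfBimod CA M} (φ : Cochain2 CA B) : Prop :=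
  ∃ τ : A →ₗ[F] M, (∀ a : A, τ (CA.D a) = B.D (τ a)) ∧
    ∀ (n : ℕ) (a b : A),
      φ.f n a b = B.lmul n a (τ b) - τ (CA.mul n a b) + B.rmul n (τ a) b


namespace CendAux

/-- Pascal's rule for sums over a range. -/
lemma pascal {F M : Type*} [Field F] [AddCommGroup M] [Module F M] (h : ℕ → ℕ → M) (n : ℕ) :
    ∑ s ∈ range (n + 2), ((n + 1).choose s : F) • h (n + 1 - s) s =
      ∑ s ∈ range (n + 1), (n.choose s : F) • (h (n - s + 1) s + h (n - s) (s + 1)) := by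
  have h1 := Finset.sum_antidiagonal_choose_succ_nsmul (fun i j => h j i) n
  rw [Finset.Nat.sum_antidiagonal_eq_sum_range_succ_mk,
    Finset.Nat.sum_antidiagonal_eq_sum_range_succ_mk,
    Finset.Nat.sum_antidiagonal_eq_sum_range_succ_mk, ← Finset.sum_add_distrib] at h1
  simp only [Nat.cast_smul_eq_nsmul]
  rw [h1]
  apply Finset.sum_congr rfl
  intro s hs
  have hs' : s ≤ n := by simp at hs; omega
  rw [smul_add]
  simp only [Nat.choose_symm hs']

/-- The alternating transform. -/
def tr (F : Type*) {M : Type*} [Field F] [AddCommGroup M] [Module F M]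
    (g : ℕ → ℕ → M) (m n : ℕ) : M :=
  ∑ s ∈ range (m + 1), ((-1 : F) ^ s * (m.choose s : F)) • g (m - s) (n + s)

lemma tr_succ {F M : Type*} [Field F] [AddCommGroup M] [Module F M]
    (g : ℕ → ℕ → M) (m n : ℕ) :
    tr F g (m + 1) n = tr F (fun i j => g (i + 1) j) m n - tr F g m (n + 1) := by
  have h := pascal (F := F) (fun i s => ((-1 : F) ^ s) • g i (n + s)) m
  unfold tr
  simp only [mul_comm ((-1 : F) ^ _), mul_smul]
  rw [h, ← Finset.sum_sub_distrib]
  apply Finset.sum_congr rfl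
  intro s _
  rw [pow_succ, ← smul_sub, show n + 1 + s = n + (s + 1) by ring]
  congr 1
  simp [sub_eq_add_neg]

lemma tr_inv {F M : Type*} [Field F] [AddCommGroup M] [Module F M]
    (n : ℕ) : ∀ (g : ℕ → ℕ → M) (m : ℕ),
    g n m = ∑ s ∈ range (n + 1), (n.choose s : F) • tr F g (n - s) (m + s) := by
  induction n with
  | zero => intro g m; simp [tr]
  | succ n ih =>
    intro g m
    have h1 := ih (fun i j => g (i + 1) j) m
    rw [pascal (F := F) (fun i s => tr F g i (m + s)) n, h1]
    apply Finset.sum_congr rfl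
    intro s _
    rw [tr_succ]
    congr 1
    rw [show m + s + 1 = m + (s + 1) by ring]
    abel

section norm
variable {F : Type*} [Field F] [CharZero F] {N : Type*} [AddCommGroup N] [Module F N]

lemma decomp (L : ℕ → N →ₗ[F] N)
    (h1 : ∀ n v, 1 ≤ n → L n (L 1 v) = L 1 (L n v) + ((n : F) - 1) • L n v)
    (h0 : ∀ n v, L 0 (L (n + 1) v) = L 1 (L n v) - L n v)
    (c : ℕ) (hc : c ≤ 1) (K : ℕ) : ∀ v, (∀ n, K < n → L n v = 0) →
      ∃ u w, v = L 1 u - (c : F) • u + w ∧ L 1 w = (c : F) • w := by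
  induction K with
  | zero =>
    intro v hv
    have hv1 := hv 1 (by norm_num)
    interval_cases c
    · exact ⟨0, v, by simp, by simp [hv1]⟩
    · exact ⟨-v, 0, by simp [hv1], by simp⟩
  | succ K ih =>
    intro v hv
    set v' := L 1 v - ((K : F) + 1) • v with hv'
    have key : ∀ n, K < n → L n v' = 0 := by
      intro n hn
      rw [hv', map_sub, map_smul, h1 n v (by omega)]
      rcases Nat.lt_or_ge (K + 1) n with h | h
      · simp [hv n h]
      · have hn' : n = K + 1 := by omega
        subst hn'
        have h2 := h0 (K + 1) v
        rw [hv (K + 1 + 1) (by omega), map_zero] at h2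
        have h3 : L 1 (L (K + 1) v) = L (K + 1) v := (sub_eq_zero.mp h2.symm)
        rw [h3]
        push_cast
        module
    by_cases hK : c = K + 1
    · have hc1 : c = 1 := by omega
      have hK0 : K = 0 := by omega
      subst hc1
      have h2 := key 1 (by omega)
      rw [hv', hK0] at h2
      refine ⟨-v, L 1 v, by simp, ?_⟩
      simp at h2
      simpa using sub_eq_zero.mp h2
    · obtain ⟨u, w, h2, h3⟩ := ih v' key
      have hne : (c : F) - ((K : F) + 1) ≠ 0 := by
        intro h
        apply hK
        have : (c : F) = ((K + 1 : ℕ) : F) := by push_cast; linear_combination h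
        exact_mod_cast this
      refine ⟨((c : F) - ((K : F) + 1))⁻¹ • (u - v), ((c : F) - ((K : F) + 1))⁻¹ • w, ?_, ?_⟩
      · rw [← sub_eq_zero]
        have : v = ((c : F) - ((K : F) + 1))⁻¹ • (((c : F) - ((K : F) + 1)) • v) := by
          rw [smul_smul, inv_mul_cancel₀ hne, one_smul]
        have h4 : ((c : F) - ((K : F) + 1)) • v =
            L 1 (u - v) - (c : F) • (u - v) + w := by
          have : L 1 v = ((K : F) + 1) • v + (L 1 u - (c : F) • u + w) := by
            rw [← h2, hv']; abel
          rw [map_sub, this]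
          module
        rw [h4] at this
        nth_rewrite 1 [this]
        rw [map_smul]
        module
      · rw [map_smul, h3, smul_comm]

lemma neg_eig (L : ℕ → N →ₗ[F] N)
    (h1 : ∀ n v, 1 ≤ n → L n (L 1 v) = L 1 (L n v) + ((n : F) - 1) • L n v)
    (h0 : ∀ n v, L 0 (L (n + 1) v) = L 1 (L n v) - L n v)
    (k : ℕ) (K : ℕ) : ∀ v, (∀ n, K < n → L n v = 0) →
      L 1 v = -((k : F) + 1) • v → v = 0 := by
  have hk : (-((k : F) + 1)) ≠ 0 := neg_ne_zero.mpr (Nat.cast_add_one_ne_zero k)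
  induction K with
  | zero =>
    intro v hv he
    rw [hv 1 (by norm_num)] at he
    exact (smul_eq_zero.mp he.symm).resolve_left hk
  | succ K ih =>
    intro v hv he
    apply ih v _ he
    intro n hn
    rcases Nat.lt_or_ge (K + 1) n with h | h
    · exact hv n h
    · have hn' : n = K + 1 := by omega
      subst hn'
      have h2 := h0 (K + 1) v
      rw [hv (K + 1 + 1) (by omega), map_zero] at h2
      have h3 : L 1 (L (K + 1) v) = L (K + 1) v := (sub_eq_zero.mp h2.symm)
      have h4 := h1 (K + 1) v (by omega)
      rw [he, h3, map_smul] at h4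
      have h5 : ((k : F) + 1 + K + 1) • L (K + 1) v = 0 := by
        have : ((k : F) + 1 + K + 1) • L (K + 1) v =
          (L (K + 1) v + (((K + 1 : ℕ) : F) - 1) • L (K + 1) v) -
            (-((k : F) + 1)) • L (K + 1) v := by push_cast; module
        rw [this, ← h4, sub_self]
      refine (smul_eq_zero.mp h5).resolve_left ?_
      have : ((k + 1 + K + 1 : ℕ) : F) ≠ 0 := Nat.cast_ne_zero.mpr (by omega)
      exact_mod_cast this

/-- The key linear-algebra lemma. -/
lemma solve (L : ℕ → N →ₗ[F] N)
    (h1 : ∀ n v, 1 ≤ n → L n (L 1 v) = L 1 (L n v) + ((n : F) - 1) • L n v)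
    (h0 : ∀ n v, L 0 (L (n + 1) v) = L 1 (L n v) - L n v)
    (h00 : ∀ n m v, L n (L m v) = L 0 (L (n + m) v) + (n : F) • L (n + m - 1) v)
    (hloc : ∀ v, ∃ K, ∀ n, K ≤ n → L n v = 0)
    (c : ℕ) (hc : c ≤ 1) (p : ℕ → N)
    (e1 : ∀ m, 2 ≤ m → L 1 (p m) = L 0 (p (m + 1)) + p m)
    (e2 : ∀ n, 1 ≤ n → L n (p 1) = L 0 (p (n + 1)) + ((n : F) - c) • p n) :
    ∃ u, p 1 = L 1 u - (c : F) • u ∧ ∀ n, 2 ≤ n → p n = L n u := by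
  obtain ⟨K, hK⟩ := hloc (p 1)
  obtain ⟨u, w, hu, hw⟩ := decomp L h1 h0 c hc K (p 1) (fun n hn => hK n hn.le)
  have neg : ∀ (k : ℕ) v, L 1 v = -((k : F) + 1) • v → v = 0 := by
    intro k v
    obtain ⟨K, hK⟩ := hloc v
    exact neg_eig L h1 h0 k K v (fun n hn => hK n hn.le)
  -- the normalized sequence
  obtain ⟨q, hq⟩ : ∃ q : ℕ → N, ∀ n, 2 ≤ n → q n = p n - L n u := ⟨_, fun n _ => rfl⟩
  have f1 : ∀ m, 2 ≤ m → L 1 (q m) = L 0 (q (m + 1)) + q m := by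
    intro m hm
    rw [hq m hm, hq (m + 1) (by omega), map_sub, map_sub, e1 m hm, h0]
    abel
  have f2 : ∀ n, 2 ≤ n → L n w = L 0 (q (n + 1)) + ((n : F) - c) • q n := by
    intro n hn
    have hw' : w = p 1 - (L 1 u - (c : F) • u) := by rw [hu]; abel
    rw [hw', map_sub, map_sub, map_smul, e2 n (by omega), hq n hn, hq (n + 1) (by omega),
      map_sub, h0, h1 n u (by omega)]
    module
  have f3 : L 1 w = L 0 (q 2) + ((1 : F) - c) • w := by
    have hw' : w = p 1 - (L 1 u - (c : F) • u) := by rw [hu]; abel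
    have := e2 1 le_rfl
    rw [hw', map_sub, map_sub, map_smul, this, hq 2 le_rfl, map_sub, h0]
    interval_cases c <;> push_cast <;> module
  have g : ∀ n, 1 ≤ n → L 1 (L n w) = ((c : F) + 1 - n) • L n w := by
    intro n hn
    have := h1 n w hn
    rw [hw, map_smul] at this
    have h2 : L 1 (L n w) = (c : F) • L n w - ((n : F) - 1) • L n w := by rw [this]; abel
    rw [h2]; module
  have z : ∀ n, c + 2 ≤ n → q n = 0 := by
    intro n hn
    obtain ⟨k, rfl⟩ := Nat.exists_eq_add_of_le hn
    have y : L (c + 2 + k) w = 0 := by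
      apply neg k
      rw [g _ (by omega)]
      congr 1
      push_cast; ring
    apply neg k
    have a := f2 (c + 2 + k) (by omega)
    rw [y] at a
    have b : L 0 (q (c + 2 + k + 1)) = -(((c + 2 + k : ℕ) : F) - c) • q (c + 2 + k) := by
      rw [neg_smul]; exact eq_neg_of_add_eq_zero_left a.symm
    rw [f1 _ (by omega), b]
    push_cast
    module
  have z2 : q 2 = 0 := by
    have z3 : q 3 = 0 := z 3 (by omega)
    interval_cases c
    · exact z 2 (by omega)
    · have a := f2 2 le_rfl
      have b := f1 2 le_rfl
      have d := g 2 (by omega)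
      norm_num [z3] at a b d
      rw [a, b] at d
      simpa using d
  have zz : ∀ n, 2 ≤ n → q n = 0 := by
    intro n hn
    rcases Nat.lt_or_ge n 3 with h | h
    · have : n = 2 := by omega
      rw [this, z2]
    · exact z n (by omega)
  have w0 : w = 0 := by
    rw [z2, map_zero, zero_add, hw] at f3
    interval_cases c
    · simpa using f3.symm
    · simpa using f3
  refine ⟨u, by rw [hu, w0]; abel, ?_⟩
  intro n hn
  have := hq n hn
  rw [zz n hn] at this
  exact sub_eq_zero.mp this.symm

end norm

section main
variable {F : Type*} [Field F] {A : Type*} [AddCommGroup A] [Module F A]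
    {M : Type*} [AddCommGroup M] [Module F M] {CA : ConfAlg F A}

lemma rev_aaa (n m : ℕ) (a b c : A) :
    CA.mul n a (CA.mul m b c) =
      ∑ s ∈ range (n + 1), (n.choose s : F) • CA.mul (m + s) (CA.mul (n - s) a b) c := by
  rw [tr_inv (F := F) n (fun i j => CA.mul i a (CA.mul j b c)) m]
  exact Finset.sum_congr rfl fun s _ => by rw [CA.assoc]; rfl

lemma rev_aau (B : ConfBimod CA M) (n m : ℕ) (a b : A) (u : M) :
    B.lmul n a (B.lmul m b u) =
      ∑ s ∈ range (n + 1), (n.choose s : F) • B.lmul (m + s) (CA.mul (n - s) a b) u := by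
  rw [tr_inv (F := F) n (fun i j => B.lmul i a (B.lmul j b u)) m]
  exact Finset.sum_congr rfl fun s _ => by rw [B.assoc_aau]; rfl

lemma rev_aua (B : ConfBimod CA M) (n m : ℕ) (a : A) (u : M) (b : A) :
    B.lmul n a (B.rmul m u b) =
      ∑ s ∈ range (n + 1), (n.choose s : F) • B.rmul (m + s) (B.lmul (n - s) a u) b := by
  rw [tr_inv (F := F) n (fun i j => B.lmul i a (B.rmul j u b)) m]
  exact Finset.sum_congr rfl fun s _ => by rw [B.assoc_aua]; rfl

lemma rev_uaa (B : ConfBimod CA M) (n m : ℕ) (u : M) (a b : A) :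
    B.rmul n u (CA.mul m a b) =
      ∑ s ∈ range (n + 1), (n.choose s : F) • B.rmul (m + s) (B.rmul (n - s) u a) b := by
  rw [tr_inv (F := F) n (fun i j => B.rmul i u (CA.mul j a b)) m]
  exact Finset.sum_congr rfl fun s _ => by rw [B.assoc_uaa]; rfl

/-- `φ - δτ`. -/
def subB {B : ConfBimod CA M} (φ : Cochain2 CA B) (τ : A →ₗ[F] M)
    (hτ : ∀ a, τ (CA.D a) = B.D (τ a)) : Cochain2 CA B where
  f n := φ.f n - ((B.lmul n).compl₂ τ - (CA.mul n).compr₂ τ + (B.rmul n).comp τ)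
  D_left s a b := by
    simp only [LinearMap.sub_apply, LinearMap.add_apply, LinearMap.compl₂_apply,
      LinearMap.compr₂_apply, LinearMap.comp_apply, φ.D_left, B.D_la, CA.D_left, hτ, B.D_ru,
      map_neg, map_smul]
    module
  D_right s a b := by
    simp only [LinearMap.sub_apply, LinearMap.add_apply, LinearMap.compl₂_apply,
      LinearMap.compr₂_apply, LinearMap.comp_apply, φ.D_right, B.D_lu, CA.D_right, hτ, B.D_ra,
      map_neg, map_smul, map_add, map_sub]
    module
  loc a b := by
    obtain ⟨N1, h1⟩ := φ.loc a b
    obtain ⟨N2, h2⟩ := B.loc_left a (τ b)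
    obtain ⟨N3, h3⟩ := CA.locality a b
    obtain ⟨N4, h4⟩ := B.loc_right (τ a) b
    refine ⟨N1 + N2 + N3 + N4, fun s hs => ?_⟩
    simp only [LinearMap.sub_apply, LinearMap.add_apply, LinearMap.compl₂_apply,
      LinearMap.compr₂_apply, LinearMap.comp_apply]
    rw [h1 s (by omega), h2 s (by omega), h3 s (by omega), h4 s (by omega)]
    simp

lemma subB_f {B : ConfBimod CA M} (φ : Cochain2 CA B) (τ : A →ₗ[F] M)
    (hτ : ∀ a, τ (CA.D a) = B.D (τ a)) (n : ℕ) (a b : A) :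
    (subB φ τ hτ).f n a b =
      φ.f n a b - (B.lmul n a (τ b) - τ (CA.mul n a b) + B.rmul n (τ a) b) := rfl

lemma subB_cocycle {B : ConfBimod CA M} (φ : Cochain2 CA B) (τ : A →ₗ[F] M)
    (hτ : ∀ a, τ (CA.D a) = B.D (τ a)) (hφ : IsCocycle φ) : IsCocycle (subB φ τ hτ) := by
  intro n m a b c
  simp only [subB_f, map_sub, map_add, LinearMap.sub_apply, LinearMap.add_apply]
  have h1 := hφ n m a b c
  have h2 := rev_aau B n m a b (τ c)
  have h3 := rev_aua B n m a (τ b) c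
  have h4 := rev_uaa B n m (τ a) b c
  have h5 := congrArg τ (rev_aaa (CA := CA) n m a b c)
  simp only [map_sum, map_smul] at h5
  have h6 := congrArg₂ (· - ·) h1 (congrArg₂ (· + ·) (congrArg₂ (· + ·) h2 h3)
    (congrArg₂ (· - ·) h4 h5))
  simp only [← Finset.sum_add_distrib, ← Finset.sum_sub_distrib] at h6
  refine Eq.trans ?_ (h6.trans ?_)
  · abel
  · apply Finset.sum_congr rfl
    intro s _
    module

lemma subB_coboundary {B : ConfBimod CA M} (φ : Cochain2 CA B) (τ : A →ₗ[F] M)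
    (hτ : ∀ a, τ (CA.D a) = B.D (τ a)) (h : IsCoboundary (subB φ τ hτ)) : IsCoboundary φ := by
  obtain ⟨σ, h1, h2⟩ := h
  refine ⟨τ + σ, fun a => by simp [hτ, h1], fun n a b => ?_⟩
  have := h2 n a b
  rw [subB_f, sub_eq_iff_eq_add] at this
  rw [this]
  simp only [LinearMap.add_apply, map_add]
  abel

/-- `H`-linear maps out of the free `H`-module. -/
lemma exists_tau {xB : ℕ → A} (hX : IsCend1x CA xB) (B : ConfBimod CA M) (v : ℕ → M) :
    ∃ τ : A →ₗ[F] M, (∀ a, τ (CA.D a) = B.D (τ a)) ∧ ∀ k, 1 ≤ k → τ (xB k) = v k := by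
  obtain ⟨hli, hsp, -⟩ := hX
  let b := Module.Basis.mk hli hsp.ge
  let τ : A →ₗ[F] M := b.constr F (fun p : ℕ × {k : ℕ // 1 ≤ k} => (B.D ^ p.1) (v p.2.1))
  have hb : ∀ (i k : ℕ) (hk : 1 ≤ k), τ ((CA.D ^ i) (xB k)) = (B.D ^ i) (v k) := by
    intro i k hk
    have h1 : b (i, ⟨k, hk⟩) = (CA.D ^ i) (xB k) := by simp [b]
    rw [← h1]
    exact b.constr_basis F _ _
  refine ⟨τ, ?_, fun k hk => by simpa using hb 0 k hk⟩
  have : τ ∘ₗ CA.D = B.D ∘ₗ τ := by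
    apply b.ext
    rintro ⟨i, k, hk⟩
    have h1 : b (i, ⟨k, hk⟩) = (CA.D ^ i) (xB k) := by simp [b]
    rw [h1, LinearMap.comp_apply, LinearMap.comp_apply, hb i k hk]
    have h2 := hb (i + 1) k hk
    rw [pow_succ', pow_succ'] at h2
    exact h2
  exact fun a => LinearMap.congr_fun this a

/-- A cochain vanishing on the generators vanishes. -/
lemma ext_zero {xB : ℕ → A} (hX : IsCend1x CA xB) {B : ConfBimod CA M} (φ : Cochain2 CA B)
    (h : ∀ n k l, 1 ≤ k → 1 ≤ l → φ.f n (xB k) (xB l) = 0) (n : ℕ) (a b : A) :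
    φ.f n a b = 0 := by
  obtain ⟨-, hsp, -⟩ := hX
  have s1 : ∀ k l, 1 ≤ k → 1 ≤ l → ∀ j n, φ.f n (xB k) ((CA.D ^ j) (xB l)) = 0 := by
    intro k l hk hl j
    induction j with
    | zero => intro n; simpa using h n k l hk hl
    | succ j ih =>
      intro n
      rw [pow_succ', Module.End.mul_apply, φ.D_right, ih, ih]; simp
  have s2 : ∀ k l, 1 ≤ k → 1 ≤ l → ∀ j i n,
      φ.f n ((CA.D ^ i) (xB k)) ((CA.D ^ j) (xB l)) = 0 := by
    intro k l hk hl j i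
    induction i with
    | zero => intro n; simpa using s1 k l hk hl j n
    | succ i ih =>
      intro n
      rw [pow_succ', Module.End.mul_apply, φ.D_left, ih]; simp
  have hz : φ.f n = 0 := by
    apply LinearMap.ext_on_range hsp
    rintro ⟨i, k, hk⟩
    apply LinearMap.ext_on_range hsp
    rintro ⟨j, l, hl⟩
    simpa using s2 k l hk hl j i n
  simp [hz]

section gens
variable {xB : ℕ → A}

lemma x0 (hX : IsCend1x CA xB) (k : ℕ) (hk : 1 ≤ k) : CA.mul 0 (xB 1) (xB k) = xB (k + 1) := by
  rw [hX.2.2 1 k 0 le_rfl hk]; simp [add_comm]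

lemma x1 (hX : IsCend1x CA xB) : CA.mul 1 (xB 1) (xB 1) = xB 1 := by
  rw [hX.2.2 1 1 1 le_rfl le_rfl]; simp

lemma x2 (hX : IsCend1x CA xB) (n : ℕ) (hn : 2 ≤ n) : CA.mul n (xB 1) (xB 1) = 0 := by
  rw [hX.2.2 1 1 n le_rfl le_rfl, Nat.descFactorial_of_lt (by omega)]; simp

/-- A sum in which only the products `x ∘₀ x` and `x ∘₁ x` survive. -/
lemma sum_x (hX : IsCend1x CA xB) {G : Type*} [AddCommGroup G] [Module F G] (g : ℕ → A →ₗ[F] G) (n : ℕ) :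
    ∑ s ∈ range (n + 1), (n.choose s : F) • g s (CA.mul (n - s) (xB 1) (xB 1)) =
      g n (xB 2) + (n : F) • g (n - 1) (xB 1) := by
  rw [sum_range_succ]
  cases n with
  | zero => simp [x0 hX 1 le_rfl]
  | succ k =>
    rw [sum_range_succ, Finset.sum_eq_zero]
    · simp [x0 hX 1 le_rfl, x1 hX, add_comm]
    · intro s hs
      rw [x2 hX _ (by simp at hs; omega)]; simp

lemma sum_x2 (hX : IsCend1x CA xB) {P G : Type*} [AddCommGroup P] [Module F P] [AddCommGroup G] [Module F G]
    (g : ℕ → A →ₗ[F] P →ₗ[F] G) (v : P) (n : ℕ) :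
    ∑ s ∈ range (n + 1), (n.choose s : F) • g s (CA.mul (n - s) (xB 1) (xB 1)) v =
      g n (xB 2) v + (n : F) • g (n - 1) (xB 1) v :=
  sum_x hX (fun s => (g s).flip v) n

lemma relL (hX : IsCend1x CA xB) (B : ConfBimod CA M) (n m : ℕ) (v : M) :
    B.lmul n (xB 1) (B.lmul m (xB 1) v) =
      B.lmul 0 (xB 1) (B.lmul (n + m) (xB 1) v) + (n : F) • B.lmul (n + m - 1) (xB 1) v := by
  rw [rev_aau, rev_aau, sum_x2 hX (fun s => B.lmul (m + s)) v,
    sum_x2 hX (fun s => B.lmul (n + m + s)) v]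
  cases n with
  | zero => simp
  | succ n => simp [add_comm, add_left_comm, add_assoc]

lemma cocE1 (hX : IsCend1x CA xB) {B : ConfBimod CA M} (φ : Cochain2 CA B) (hφ : IsCocycle φ) (m : ℕ) (hm : 2 ≤ m) :
    B.lmul 1 (xB 1) (φ.f m (xB 1) (xB 1)) = B.lmul 0 (xB 1) (φ.f (m + 1) (xB 1) (xB 1))
      + φ.f m (xB 1) (xB 1) + B.rmul m (φ.f 1 (xB 1) (xB 1)) (xB 1) := by
  have h1 := hφ 1 m (xB 1) (xB 1) (xB 1)
  have h2 := hφ 0 (m + 1) (xB 1) (xB 1) (xB 1)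
  rw [x2 hX m hm] at h1
  rw [x2 hX (m + 1) (by omega)] at h2
  simp [sum_range_succ, x1 hX] at h1 h2
  rw [h1, h2]
  abel

lemma cocE2 (hX : IsCend1x CA xB) {B : ConfBimod CA M} (φ : Cochain2 CA B) (hφ : IsCocycle φ) (n : ℕ) (hn : 1 ≤ n) :
    B.lmul n (xB 1) (φ.f 1 (xB 1) (xB 1)) = B.lmul 0 (xB 1) (φ.f (n + 1) (xB 1) (xB 1))
      + ((n : F) - 1) • φ.f n (xB 1) (xB 1)
      + ∑ s ∈ range n, (n.choose s : F) • B.rmul (1 + s) (φ.f (n - s) (xB 1) (xB 1)) (xB 1) := by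
  have h1 := hφ n 1 (xB 1) (xB 1) (xB 1)
  have h2 := hφ 0 (n + 1) (xB 1) (xB 1) (xB 1)
  rw [x2 hX (n + 1) (by omega)] at h2
  simp [x0 hX 1 le_rfl] at h2
  simp only [smul_add, sum_add_distrib] at h1
  rw [sum_x2 hX (fun s => φ.f (1 + s)) (xB 1), x1 hX, sum_range_succ] at h1
  simp only [Nat.choose_self, Nat.cast_one, one_smul, Nat.sub_self,
    show 1 + (n - 1) = n by omega, add_comm 1 n] at h1
  rw [eq_sub_of_add_eq h1, h2]
  module

/-- Once normalized on generators, the cocycle vanishes. -/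
lemma normalized (hX : IsCend1x CA xB) {B : ConfBimod CA M} (φ : Cochain2 CA B) (hφ : IsCocycle φ)
    (h1 : ∀ n, 1 ≤ n → φ.f n (xB 1) (xB 1) = 0)
    (h0 : ∀ k, 1 ≤ k → φ.f 0 (xB 1) (xB k) = 0) (n : ℕ) (a b : A) : φ.f n a b = 0 := by
  have hx : ∀ n, φ.f n (xB 1) (xB 1) = 0 := by
    intro n
    rcases Nat.eq_zero_or_pos n with h | h
    · rw [h]; exact h0 1 le_rfl
    · exact h1 n h
  have hm : ∀ k l m, 1 ≤ k → 1 ≤ l → φ.f 0 (xB 1) (CA.mul m (xB k) (xB l)) = 0 := by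
    intro k l m hk hl
    rw [hX.2.2 k l m hk hl, map_smul]
    by_cases h : m ≤ l
    · rw [h0 _ (by omega), smul_zero]
    · rw [Nat.descFactorial_of_lt (by omega)]; simp
  have s1 : ∀ k, 1 ≤ k → ∀ n, φ.f n (xB 1) (xB k) = 0 := by
    intro k hk
    induction k, hk using Nat.le_induction with
    | base => exact hx
    | succ k hk ih =>
      intro n
      have e := hφ n 0 (xB 1) (xB 1) (xB k)
      have e2 := hφ 0 n (xB 1) (xB 1) (xB k)
      simp [ih, hm 1 k n le_rfl hk, hx, x0 hX 1 le_rfl] at e2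
      simp only [smul_add, sum_add_distrib, hx, map_zero, LinearMap.zero_apply, smul_zero,
        sum_const_zero, add_zero, h0 k hk, zero_add, x0 hX k hk] at e
      rw [sum_x2 hX (fun s => φ.f s) (xB k)] at e
      rw [e, ← e2, ih, smul_zero, add_zero]
  apply ext_zero hX
  intro n k l hk
  induction k, hk using Nat.le_induction generalizing n l with
  | base => exact fun hl => s1 l hl n
  | succ k hk ih =>
    intro hl
    have e := hφ 0 n (xB 1) (xB k) (xB l)
    simp [ih n l hl, hm k l n hk hl, h0 k hk, x0 hX k hk] at e
    exact e.symm

end gens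
end main

end CendAux

open CendAux

/-- **Theorem (main).** Let `M` be a conformal bimodule over the associative
conformal algebra `Cend_{1,x}`. Then `H²(Cend_{1,x}, M) = 0`: every 2-cocycle
of `Cend_{1,x}` with values in `M` is a 2-coboundary. -/
theorem H2_Cend1x_eq_zero {F : Type*} [Field F] [CharZero F]
    {A : Type*} [AddCommGroup A] [Module F A]
    {M : Type*} [AddCommGroup M] [Module F M]
    (CA : ConfAlg F A) (xB : ℕ → A) (hX : IsCend1x CA xB)
    (B : ConfBimod CA M) (φ : Cochain2 CA B) (hφ : IsCocycle φ) :
    IsCoboundary φ := by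
  -- operators
  let L : ℕ → M →ₗ[F] M := fun n => B.lmul n (xB 1)
  let R : ℕ → M →ₗ[F] M := fun n => (B.rmul n).flip (xB 1)
  have h00 : ∀ n m v, L n (L m v) = L 0 (L (n + m) v) + (n : F) • L (n + m - 1) v :=
    fun n m v => relL hX B n m v
  have h0 : ∀ n v, L 0 (L (n + 1) v) = L 1 (L n v) - L n v := by
    intro n v
    rw [h00 1 n v, add_comm 1 n]; simp
  have h1 : ∀ n v, 1 ≤ n → L n (L 1 v) = L 1 (L n v) + ((n : F) - 1) • L n v := by
    intro n v _
    rw [h00 n 1 v, h0]; simp only [Nat.add_sub_cancel]; module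
  have hloc : ∀ v, ∃ K, ∀ n, K ≤ n → L n v = 0 := fun v => B.loc_left (xB 1) v
  have R1 : ∀ m v, R 1 (R m v) = R m v := by
    intro m v
    change B.rmul 1 (B.rmul m v (xB 1)) (xB 1) = B.rmul m v (xB 1)
    rw [B.assoc_uaa, Finset.sum_eq_single 0]
    · simp [x1 hX]
    · intro s _ hs; rw [x2 hX _ (by omega)]; simp
    · simp
  have R2 : ∀ n m v, 2 ≤ n → R n (R m v) = 0 := by
    intro n m v hn
    change B.rmul n (B.rmul m v (xB 1)) (xB 1) = 0
    rw [B.assoc_uaa]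
    apply Finset.sum_eq_zero
    intro s _; rw [x2 hX _ (by omega)]; simp
  let V : Submodule F M := LinearMap.range (R 1)
  have hRV : ∀ m v, R m v ∈ V := fun m v => ⟨R m v, R1 m v⟩
  have hRV' : ∀ m v, B.rmul m v (xB 1) ∈ V := hRV
  have V1 : ∀ v ∈ V, R 1 v = v := by rintro _ ⟨v, rfl⟩; exact R1 1 v
  have V2 : ∀ v ∈ V, ∀ n, 2 ≤ n → R n v = 0 := by
    rintro _ ⟨v, rfl⟩ n hn; exact R2 n 1 v hn
  have hLV : ∀ m, ∀ v ∈ V, L m v ∈ V := by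
    intro m v hv
    refine ⟨L m v, ?_⟩
    change B.rmul 1 (B.lmul m (xB 1) v) (xB 1) = B.lmul m (xB 1) v
    rw [B.assoc_aua, Finset.sum_eq_single 0]
    · have := V1 v hv
      change B.rmul 1 v (xB 1) = v at this
      simp [this]
    · intro s _ hs
      have := V2 v hv (1 + s) (by omega)
      change B.rmul (1 + s) v (xB 1) = 0 at this
      rw [this]; simp
    · simp
  -- step 1: reduce to `p n ∈ V`
  let LQ : ℕ → (M ⧸ V) →ₗ[F] (M ⧸ V) := fun n => V.mapQ V (L n) (fun v hv => hLV n v hv)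
  have LQmk : ∀ n v, LQ n (V.mkQ v) = V.mkQ (L n v) := fun n v => rfl
  have hmk0 : ∀ v ∈ V, V.mkQ v = 0 := fun v hv => by simpa using hv
  have step1 := solve LQ
    (by
      intro n v hn
      obtain ⟨v, rfl⟩ := V.mkQ_surjective v
      simp only [LQmk, h1 n v hn, map_add, map_smul])
    (by
      intro n v
      obtain ⟨v, rfl⟩ := V.mkQ_surjective v
      simp only [LQmk, h0 n v, map_sub])
    (by
      intro n m v
      obtain ⟨v, rfl⟩ := V.mkQ_surjective v
      simp only [LQmk, h00 n m v, map_add, map_smul])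
    (by
      intro v
      obtain ⟨v, rfl⟩ := V.mkQ_surjective v
      obtain ⟨K, hK⟩ := hloc v
      exact ⟨K, fun n hn => by rw [LQmk, hK n hn, map_zero]⟩)
    1 le_rfl (fun n => V.mkQ (φ.f n (xB 1) (xB 1)))
    (by
      intro m hm
      have e := congrArg V.mkQ (cocE1 hX φ hφ m hm)
      rw [map_add, map_add, hmk0 _ (hRV' m _), add_zero] at e
      exact e)
    (by
      intro n hn
      have e := congrArg V.mkQ (cocE2 hX φ hφ n hn)
      rw [map_add, map_add, hmk0 _ (V.sum_mem fun s _ => V.smul_mem _ (hRV' (1 + s) _)),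
        add_zero, map_smul] at e
      rw [Nat.cast_one]
      exact e)
  obtain ⟨u, hu1, hu2⟩ := step1
  obtain ⟨u, rfl⟩ := V.mkQ_surjective u
  obtain ⟨τ, hτ, hτx⟩ := exists_tau hX B (fun _ => u)
  apply subB_coboundary φ τ hτ
  have hψ := subB_cocycle φ τ hτ hφ
  have hψV : ∀ n, 1 ≤ n → (subB φ τ hτ).f n (xB 1) (xB 1) ∈ V := by
    intro n hn
    rw [← V.ker_mkQ, LinearMap.mem_ker, subB_f, map_sub, map_add, hmk0 _ (hRV' n _),
      add_zero, map_sub, hτx 1 le_rfl]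
    rcases Nat.lt_or_ge n 2 with h | h
    · have : n = 1 := by omega
      subst this
      rw [x1 hX, hτx 1 le_rfl]
      rw [LQmk] at hu1
      rw [hu1]
      simp [L]
    · rw [x2 hX n h, hu2 n h, LQmk]
      simp [L]
  generalize subB φ τ hτ = ψ at hψ hψV
  -- step 2: kill `p n`, `n ≥ 1`
  let LV : ℕ → V →ₗ[F] V := fun n => (L n).restrict (hLV n)
  have LVc : ∀ n v, ((LV n v : V) : M) = L n (v : M) := fun n v => rfl
  obtain ⟨p, hp⟩ : ∃ p : ℕ → V, ∀ n, 1 ≤ n → (p n : M) = ψ.f n (xB 1) (xB 1) := by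
    refine ⟨fun n => if h : 1 ≤ n then ⟨_, hψV n h⟩ else 0, fun n hn => ?_⟩
    simp [hn]
  have step2 := solve LV
    (by
      intro n v hn
      apply Subtype.ext
      simp [LVc, h1 n v hn])
    (by
      intro n v
      apply Subtype.ext
      simp [LVc, h0 n v])
    (by
      intro n m v
      apply Subtype.ext
      simp only [LVc, h00 n m v, Submodule.coe_add, Submodule.coe_smul])
    (by
      intro v
      obtain ⟨K, hK⟩ := hloc v
      exact ⟨K, fun n hn => Subtype.ext (by rw [LVc, hK n hn]; rfl)⟩)
    0 (by norm_num) p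
    (by
      intro m hm
      apply Subtype.ext
      have e := cocE1 hX ψ hψ m hm
      have e' : B.rmul m (ψ.f 1 (xB 1) (xB 1)) (xB 1) = 0 := V2 _ (hψV 1 le_rfl) m hm
      rw [e', add_zero, ← hp m (by omega), ← hp (m + 1) (by omega)] at e
      exact e)
    (by
      intro n hn
      apply Subtype.ext
      have e := cocE2 hX ψ hψ n hn
      have e' : ∑ s ∈ range n, (n.choose s : F) •
          B.rmul (1 + s) (ψ.f (n - s) (xB 1) (xB 1)) (xB 1) = ψ.f n (xB 1) (xB 1) := by
        rw [Finset.sum_eq_single 0]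
        · have := V1 _ (hψV n hn)
          simpa [R] using this
        · intro s hs h
          have hs' : s < n := by simpa using hs
          have : B.rmul (1 + s) (ψ.f (n - s) (xB 1) (xB 1)) (xB 1) = 0 :=
            V2 _ (hψV (n - s) (by omega)) (1 + s) (by omega)
          rw [this, smul_zero]
        · intro h; simp at h; omega
      rw [e', ← hp n hn, ← hp 1 le_rfl, ← hp (n + 1) (by omega)] at e
      rw [LVc]
      refine Eq.trans e ?_
      simp only [Submodule.coe_add, Submodule.coe_smul, LVc, L]
      push_cast
      module)
  obtain ⟨w, hw1, hw2⟩ := step2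
  obtain ⟨σ, hσ, hσx⟩ := exists_tau hX B (fun _ => (w : M))
  apply subB_coboundary ψ σ hσ
  have hχ := subB_cocycle ψ σ hσ hψ
  have hχ1 : ∀ n, 1 ≤ n → (subB ψ σ hσ).f n (xB 1) (xB 1) = 0 := by
    intro n hn
    rw [subB_f, ← hp n hn, hσx 1 le_rfl]
    rcases Nat.lt_or_ge n 2 with h | h
    · have : n = 1 := by omega
      subst this
      have hr : B.rmul 1 (w : M) (xB 1) = w := V1 _ w.2
      rw [x1 hX, hσx 1 le_rfl, hr, hw1]
      simp [LVc, L]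
    · have hr : B.rmul n (w : M) (xB 1) = 0 := V2 _ w.2 n h
      rw [x2 hX n h, hr, hw2 n h, LVc]
      simp [L]
  generalize subB ψ σ hσ = χ at hχ hχ1
  -- step 3: kill `χ₀(x, x^k)`
  let v : ℕ → M := fun k => Nat.rec (motive := fun _ => M) 0
    (fun j y => if j = 0 then 0 else B.lmul 0 (xB 1) y - χ.f 0 (xB 1) (xB j)) k
  have v1 : v 1 = 0 := rfl
  have vs : ∀ k, 1 ≤ k → v (k + 1) = B.lmul 0 (xB 1) (v k) - χ.f 0 (xB 1) (xB k) := by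
    intro k hk
    exact if_neg (by omega)
  obtain ⟨ρ, hρ, hρx⟩ := exists_tau hX B v
  apply subB_coboundary χ ρ hρ
  have hω := subB_cocycle χ ρ hρ hχ
  refine ⟨0, by simp, fun n a b => ?_⟩
  have := normalized hX (subB χ ρ hρ) hω
    (by
      intro n hn
      rw [subB_f, hχ1 n hn, hρx 1 le_rfl, v1]
      rcases Nat.lt_or_ge n 2 with h | h
      · have : n = 1 := by omega
        subst this
        rw [x1 hX, hρx 1 le_rfl, v1]; simp
      · rw [x2 hX n h]; simp)
    (by
      intro k hk
      rw [subB_f, x0 hX k hk, hρx (k + 1) (by omega), hρx k hk, hρx 1 le_rfl, v1, vs k hk]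
      simp)
    n a b
  simp [this]
end

section
/- The conformal algebra Cend_{1,x} splits off in every singular extension: for every associative conformal algebra B and surjective homomorphism of conformal algebras σ : B → Cend_{1,x} such that (Ker σ) ∘ₙ (Ker σ) = 0 for all n ∈ ℤ₊, there exists a subalgebra A' ⊆ B such that σ restricts to an isomorphism of A' onto Cend_{1,x} and B = A' ⊕ Ker σ as H-modules. -/
open Finset

namespace CendSplit

variable {F : Type*} [Field F] {B : Type*} [AddCommGroup B] [Module F B]

theorem alt_sum (n : ℕ) :
    ∑ i ∈ range (n + 1), ((-1 : F) ^ i * (n.choose i : F)) = if n = 0 then 1 else 0 := by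
  have h := Int.alternating_sum_range_choose (n := n)
  have h2 := congrArg (Int.cast : ℤ → F) h
  push_cast at h2
  rw [h2]

theorem assoc_inv (CB : ConfAlg F B) (n m : ℕ) (a b c : B) :
    CB.mul n a (CB.mul m b c) =
      ∑ s ∈ range (n + 1), (n.choose s : F) • CB.mul (m + s) (CB.mul (n - s) a b) c := by
  have h1 : ∀ s ∈ range (n + 1),
      (n.choose s : F) • CB.mul (m + s) (CB.mul (n - s) a b) c =
      ∑ t ∈ range (n + 1 - s), ((-1 : F) ^ t * (n.choose (s + t) * (s + t).choose t : F)) •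
        CB.mul (n - (s + t)) a (CB.mul (m + (s + t)) b c) := by
    intro s hs
    have hs' : s ≤ n := by simpa [Nat.lt_succ_iff] using hs
    rw [CB.assoc, smul_sum, show n + 1 - s = n - s + 1 by omega]
    refine sum_congr rfl fun t ht => ?_
    have ht' : t ≤ n - s := by simpa [Nat.lt_succ_iff] using ht
    rw [smul_smul, Nat.sub_sub, add_assoc]
    congr 1
    have h : n.choose (s + t) * (s + t).choose s = n.choose s * (n - s).choose t := by
      have := Nat.choose_mul (n := n) (k := s + t) (s := s) (by omega)
      simpa using this
    have h' : (s + t).choose t = (s + t).choose s := by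
      rw [Nat.choose_symm_add]
    have h3 := congrArg (Nat.cast : ℕ → F) h
    push_cast at h3
    rw [h', h3]; ring
  rw [sum_congr rfl h1]
  rw [← sum_range_diag_flip (n + 1) (fun s t => ((-1 : F) ^ t * (n.choose (s + t) * (s + t).choose t : F)) •
        CB.mul (n - (s + t)) a (CB.mul (m + (s + t)) b c))]
  have h2 : ∀ r ∈ range (n + 1), ∑ k ∈ range (r + 1),
      ((-1 : F) ^ (r - k) * (n.choose (k + (r - k)) * (k + (r - k)).choose (r - k) : F)) •
        CB.mul (n - (k + (r - k))) a (CB.mul (m + (k + (r - k))) b c) =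
      if r = 0 then CB.mul n a (CB.mul m b c) else 0 := by
    intro r hr
    have : ∀ k ∈ range (r + 1), ((-1 : F) ^ (r - k) *
        (n.choose (k + (r - k)) * (k + (r - k)).choose (r - k) : F)) •
        CB.mul (n - (k + (r - k))) a (CB.mul (m + (k + (r - k))) b c) =
        ((-1 : F) ^ (r - k) * (r.choose (r - k) : F)) •
          ((n.choose r : F) • CB.mul (n - r) a (CB.mul (m + r) b c)) := by
      intro k hk
      have hk' : k ≤ r := by simpa [Nat.lt_succ_iff] using hk
      rw [show k + (r - k) = r by omega, smul_smul]
      congr 1; ring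
    rw [sum_congr rfl this, ← sum_smul]
    have h3 := sum_range_reflect (fun i => (-1 : F) ^ i * (r.choose i : F)) (r + 1)
    simp only [Nat.add_sub_cancel] at h3
    rw [h3, alt_sum]
    split_ifs with h
    · subst h; simp
    · simp
  rw [sum_congr rfl h2]
  simp

/-- `e` is a lift of `x` modulo the square-zero ideal `K`. -/
structure Lift (CB : ConfAlg F B) (K : Submodule F B) (e : B) : Prop where
  idl : ∀ (n : ℕ) (b m : B), m ∈ K → CB.mul n b m ∈ K
  idr : ∀ (n : ℕ) (m b : B), m ∈ K → CB.mul n m b ∈ K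
  sq : ∀ (n : ℕ) (a b : B), a ∈ K → b ∈ K → CB.mul n a b = 0
  h1 : CB.mul 1 e e - e ∈ K
  h2 : ∀ n, 2 ≤ n → CB.mul n e e ∈ K

/-- The defect of `e`. -/
def phi (CB : ConfAlg F B) (e : B) (n : ℕ) : B :=
  if n = 0 then 0 else CB.mul n e e - if n = 1 then e else 0

section
variable {CB : ConfAlg F B} {K : Submodule F B} {e : B}

theorem phi_zero : phi CB e 0 = 0 := by simp [phi]

theorem Lift.phi_mem (h : Lift CB K e) (n : ℕ) : phi CB e n ∈ K := by
  unfold phi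
  rcases n with _ | _ | n
  · simp
  · simpa using h.h1
  · simpa using h.h2 (n + 2) (by omega)

theorem sum_split (T : ℕ → B →ₗ[F] B) (n : ℕ) :
    ∑ s ∈ range (n + 1), (n.choose s : F) • T s (CB.mul (n - s) e e) =
      ∑ s ∈ range (n + 1), (n.choose s : F) • T s (phi CB e (n - s)) +
      (n : F) • T (n - 1) e + T n (CB.mul 0 e e) := by
  rcases n with _ | n
  · simp [phi]
  · have : ∀ s ∈ range n, ((n+1).choose s : F) • T s (CB.mul (n + 1 - s) e e) =
        ((n+1).choose s : F) • T s (phi CB e (n + 1 - s)) := by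
      intro s hs
      have hs : s < n := by simpa using hs
      rw [phi, if_neg (by omega), if_neg (by omega), sub_zero]
    rw [sum_range_succ, sum_range_succ, sum_congr rfl this, sum_range_succ _ (n + 1),
      sum_range_succ _ n]
    simp [phi, smul_sub]
    abel

theorem Lift.comm (h : Lift CB K e) (n : ℕ) (m : B) (hm : m ∈ K) :
    CB.mul n e (CB.mul 0 e m) = CB.mul 0 e (CB.mul n e m) + (n : F) • CB.mul (n - 1) e m := by
  rw [assoc_inv]
  have := sum_split (CB := CB) (e := e) (fun s => (CB.mul (0 + s)).flip m) n
  simp only [LinearMap.flip_apply] at this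
  rw [this, sum_eq_zero, zero_add, CB.assoc]
  · simp [add_comm]
  · intro s _
    rw [h.sq _ _ _ (h.phi_mem _) hm, smul_zero]

theorem mul_ee (k : ℕ) (hk : 1 ≤ k) : CB.mul k e e = phi CB e k + if k = 1 then e else 0 := by
  rw [phi, if_neg (by omega)]; abel

theorem cocycle (n k : ℕ) (hk : 1 ≤ k) :
    CB.mul n e (phi CB e k) = CB.mul 0 e (phi CB e (n + k)) + (n : F) • phi CB e (n + k - 1)
      - (if k = 1 then phi CB e n else 0) +
      ∑ s ∈ range (n + 1), (n.choose s : F) • CB.mul (k + s) (phi CB e (n - s)) e := by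
  have h0 := assoc_inv CB n k e e e
  have := sum_split (CB := CB) (e := e) (fun s => (CB.mul (k + s)).flip e) n
  simp only [LinearMap.flip_apply] at this
  rw [this, CB.assoc, mul_ee k hk, map_add] at h0
  rw [eq_sub_of_add_eq h0]
  simp only [zero_add, range_one, sum_singleton, pow_zero, Nat.choose_self, Nat.cast_one, mul_one,
    one_smul, add_zero, Nat.sub_zero]
  rw [mul_ee (k + n) (by omega)]
  rcases n with _ | n
  · rcases k with _ | _ | k
    · omega
    · simp [phi]
    · simp [phi]
  · rw [show k + (n + 1 - 1) = k + n by omega, mul_ee (k + n) (by omega),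
      show n + 1 + k - 1 = k + n by omega, show n + 1 + k = k + (n + 1) by omega,
      if_neg (show ¬ (k + (n + 1) = 1) by omega)]
    by_cases h1 : k = 1
    · subst h1
      rcases n with _ | n
      · simp [phi]; abel
      · simp [phi]; abel
    · rw [if_neg h1, if_neg h1, if_neg (by omega)]
      simp
      abel

theorem Lift.Lpow (h : Lift CB K e) (l n : ℕ) (m : B) (hm : m ∈ K) :
    CB.mul n e ((CB.mul 0 e ^ l) m) = ∑ i ∈ range (l + 1),
      ((l.choose i : F) * (n.descFactorial i : F)) •
        (CB.mul 0 e ^ (l - i)) (CB.mul (n - i) e m) := by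
  induction l generalizing m with
  | zero => simp
  | succ l ih =>
    have hp : (CB.mul 0 e ^ (l + 1)) m = (CB.mul 0 e ^ l) (CB.mul 0 e m) := by
      rw [pow_succ]; rfl
    rw [hp, ih _ (h.idl _ _ _ hm)]
    have h1 : ∀ i ∈ range (l + 1), ((l.choose i : F) * (n.descFactorial i : F)) •
        (CB.mul 0 e ^ (l - i)) (CB.mul (n - i) e (CB.mul 0 e m)) =
        ((l.choose i : F) * (n.descFactorial i : F)) •
          (CB.mul 0 e ^ (l + 1 - i)) (CB.mul (n - i) e m) +
        ((l.choose i : F) * (n.descFactorial (i + 1) : F)) •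
          (CB.mul 0 e ^ (l + 1 - (i + 1))) (CB.mul (n - (i + 1)) e m) := by
      intro i hi
      have hi' : i < l + 1 := by simpa using hi
      rw [h.comm _ _ hm, map_add, smul_add, show l + 1 - i = l - i + 1 by omega, pow_succ]
      congr 1
      rw [map_smul, smul_smul, Nat.descFactorial_succ, Nat.sub_sub,
        show l + 1 - (i + 1) = l - i by omega]
      congr 1
      push_cast; ring
    rw [sum_congr rfl h1, sum_add_distrib, sum_range_succ' _ (l + 1)]
    have h2 : ∑ i ∈ range (l + 1), ((l.choose i : F) * (n.descFactorial i : F)) •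
          (CB.mul 0 e ^ (l + 1 - i)) (CB.mul (n - i) e m) =
        ∑ i ∈ range (l + 1), ((l.choose (i + 1) : F) * (n.descFactorial (i + 1) : F)) •
          (CB.mul 0 e ^ (l + 1 - (i + 1))) (CB.mul (n - (i + 1)) e m) +
          ((l.choose 0 : F) * (n.descFactorial 0 : F)) •
          (CB.mul 0 e ^ (l + 1 - 0)) (CB.mul (n - 0) e m) := by
      rw [← sum_range_succ' (fun i => ((l.choose i : F) * (n.descFactorial i : F)) •
          (CB.mul 0 e ^ (l + 1 - i)) (CB.mul (n - i) e m)) (l + 1), sum_range_succ _ (l + 1)]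
      simp
    rw [h2, add_right_comm, ← sum_add_distrib]
    simp only [Nat.choose_succ_succ, Nat.cast_add, add_mul, add_smul, Nat.choose_zero_right]
    congr 1
    exact sum_congr rfl fun i _ => add_comm _ _

/-- `E f = ∑ (-p)^l f_l / l!`. -/
def E (CB : ConfAlg F B) (e : B) (N : ℕ) (f : ℕ → B) : B :=
  ∑ l ∈ range N, ((-1 : F) ^ l / (l.factorial : F)) • (CB.mul 0 e ^ l) (f l)

theorem Lift.LE [CharZero F] (h : Lift CB K e) (N n : ℕ) (f : ℕ → B) (hf : ∀ l, f l ∈ K)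
    (hN : ∀ l, N ≤ l → f l = 0) :
    CB.mul n e (E CB e N f) = E CB e N (fun j => ∑ i ∈ range (n + 1),
      ((-1 : F) ^ i * (n.choose i : F)) • CB.mul (n - i) e (f (i + j))) := by
  let G : ℕ → ℕ → B := fun i j => (((-1 : F) ^ j / (j.factorial : F)) *
    ((-1 : F) ^ i * (n.choose i : F))) • (CB.mul 0 e ^ j) (CB.mul (n - i) e (f (i + j)))
  have hG : ∀ i j, N ≤ i + j → G i j = 0 := by
    intro i j hij
    simp [G, hN _ hij]
  have hG2 : ∀ i j, n < i → G i j = 0 := by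
    intro i j hij
    simp [G, Nat.choose_eq_zero_of_lt hij]
  have hL : CB.mul n e (E CB e N f) = ∑ l ∈ range N, ∑ i ∈ range (l + 1), G i (l - i) := by
    rw [E, map_sum]
    refine sum_congr rfl fun l _ => ?_
    rw [map_smul, h.Lpow _ _ _ (hf l), smul_sum]
    refine sum_congr rfl fun i hi => ?_
    have hi' : i ≤ l := by simpa [Nat.lt_succ_iff] using hi
    obtain ⟨j, rfl⟩ := Nat.exists_eq_add_of_le hi'
    simp only [G, smul_smul, Nat.add_sub_cancel_left]
    congr 1
    have e1 : ((i + j).choose i : F) * (i.factorial : F) * (j.factorial : F) =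
        ((i + j).factorial : F) := by
      rw [Nat.choose_symm_add]
      exact_mod_cast Nat.add_choose_mul_factorial_mul_factorial i j
    have e2 : (n.descFactorial i : F) = (i.factorial : F) * (n.choose i : F) := by
      exact_mod_cast Nat.descFactorial_eq_factorial_mul_choose n i
    have a1 : (i.factorial : F) ≠ 0 := by exact_mod_cast i.factorial_ne_zero
    have a2 : (j.factorial : F) ≠ 0 := by exact_mod_cast j.factorial_ne_zero
    have a3 : ((i + j).factorial : F) ≠ 0 := by exact_mod_cast (i + j).factorial_ne_zero
    rw [e2, pow_add]
    field_simp
    rw [← e1]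
    ring
  rw [hL, sum_range_diag_flip]
  have hR : E CB e N (fun j => ∑ i ∈ range (n + 1),
      ((-1 : F) ^ i * (n.choose i : F)) • CB.mul (n - i) e (f (i + j))) =
      ∑ j ∈ range N, ∑ i ∈ range (n + 1), G i j := by
    rw [E]
    refine sum_congr rfl fun j _ => ?_
    rw [map_sum, smul_sum]
    refine sum_congr rfl fun i _ => ?_
    simp only [G, map_smul, smul_smul]
  rw [hR, sum_comm]
  have h1 : ∀ i, ∑ j ∈ range (N - i), G i j = ∑ j ∈ range N, G i j := by
    intro i
    refine sum_subset (range_subset_range.2 (by omega)) fun j _ hj => hG _ _ ?_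
    simp at hj; omega
  simp only [h1]
  have h2 : ∑ i ∈ range N, ∑ j ∈ range N, G i j =
      ∑ i ∈ range (N + n + 1), ∑ j ∈ range N, G i j := by
    refine sum_subset (range_subset_range.2 (by omega)) fun i _ hi => ?_
    refine sum_eq_zero fun j _ => hG _ _ ?_
    simp at hi; omega
  rw [h2]
  symm
  refine sum_subset (range_subset_range.2 (by omega)) fun i _ hi => ?_
  refine sum_eq_zero fun j _ => hG2 _ _ ?_
  simp at hi; omega

theorem diff_succ (n : ℕ) (g : ℕ → F) :
    ∑ i ∈ range (n + 1 + 1), ((-1 : F) ^ i * ((n + 1).choose i : F)) * g i =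
    ∑ i ∈ range (n + 1), ((-1 : F) ^ i * (n.choose i : F)) * g i -
    ∑ i ∈ range (n + 1), ((-1 : F) ^ i * (n.choose i : F)) * g (i + 1) := by
  rw [sum_range_succ' _ (n + 1)]
  have h2 : ∑ i ∈ range (n + 1), ((-1 : F) ^ i * (n.choose i : F)) * g i =
      ∑ i ∈ range (n + 1), ((-1 : F) ^ (i + 1) * (n.choose (i + 1) : F)) * g (i + 1) + g 0 := by
    have := sum_range_succ' (fun i => ((-1 : F) ^ i * (n.choose i : F)) * g i) (n + 1)
    rw [sum_range_succ _ (n + 1)] at this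
    simpa using this
  rw [h2]
  simp only [Nat.choose_succ_succ, Nat.cast_add, pow_succ, pow_zero, Nat.choose_zero_right,
    Nat.cast_one, one_mul]
  rw [add_sub_right_comm, ← sum_sub_distrib]
  congr 1
  refine sum_congr rfl fun i _ => ?_
  ring

theorem alt_sum_lin (n : ℕ) (hn : 1 ≤ n) :
    ∑ i ∈ range (n + 1), ((-1 : F) ^ i * (n.choose i : F)) * ((n - i : ℕ) : F) =
      if n = 1 then 1 else 0 := by
  obtain ⟨n, rfl⟩ := Nat.exists_eq_add_of_le' hn
  have h1 : ∀ i ∈ range (n + 1 + 1), ((-1 : F) ^ i * ((n + 1).choose i : F)) * ((n + 1 - i : ℕ) : F)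
      = ((-1 : F) ^ i * ((n + 1).choose i : F)) * ((fun i : ℕ => (n : F) + 1 - (i : F)) i) := by
    intro i hi
    have : i ≤ n + 1 := by simpa [Nat.lt_succ_iff] using hi
    rw [Nat.cast_sub this]; push_cast; rfl
  rw [sum_congr rfl h1, diff_succ, ← sum_sub_distrib]
  have h2 : ∀ i ∈ range (n + 1), ((-1 : F) ^ i * (n.choose i : F)) * ((n : F) + 1 - (i : F)) -
      ((-1 : F) ^ i * (n.choose i : F)) * ((n : F) + 1 - ((i + 1 : ℕ) : F)) =
      ((-1 : F) ^ i * (n.choose i : F)) := by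
    intro i _; push_cast; ring
  rw [sum_congr rfl h2, alt_sum]
  simp

theorem alt_sum_beta [CharZero F] (n l : ℕ) :
    ∑ i ∈ range (n + 1), ((-1 : F) ^ i * (n.choose i : F)) * ((i + l + 1 : ℕ) : F)⁻¹ =
      (l.factorial : F) * (n.factorial : F) / ((n + l + 1).factorial : F) := by
  induction n generalizing l with
  | zero =>
    have a1 : (l.factorial : F) ≠ 0 := by exact_mod_cast l.factorial_ne_zero
    have a2 : (l : F) + 1 ≠ 0 := by exact_mod_cast l.succ_ne_zero
    simp [Nat.factorial_succ]
    field_simp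
  | succ n ih =>
    rw [diff_succ n (fun i => ((i + l + 1 : ℕ) : F)⁻¹), ih l]
    have := ih (l + 1)
    simp only [show ∀ i, i + (l + 1) + 1 = i + 1 + l + 1 by intro i; omega] at this
    rw [this]
    rw [show n + 1 + l + 1 = (n + l + 1) + 1 by omega, Nat.factorial_succ (n + l + 1),
      Nat.factorial_succ l, Nat.factorial_succ n]
    have a1 : ((n + l + 1).factorial : F) ≠ 0 := by exact_mod_cast (n + l + 1).factorial_ne_zero
    have a2 : ((n + l + 1 + 1 : ℕ) : F) ≠ 0 := by exact_mod_cast (n + l + 1).succ_ne_zero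
    push_cast at a2 ⊢
    field_simp
    ring

theorem E_add (N : ℕ) (f g : ℕ → B) :
    E CB e N (fun j => f j + g j) = E CB e N f + E CB e N g := by
  simp [E, sum_add_distrib]

theorem E_smul (N : ℕ) (c : F) (f : ℕ → B) :
    E CB e N (fun j => c • f j) = c • E CB e N f := by
  simp only [E, map_smul, smul_sum]
  exact sum_congr rfl fun i _ => smul_comm _ _ _

theorem E_mem (W : Submodule F B) (hW : ∀ v ∈ W, CB.mul 0 e v ∈ W) (N : ℕ) (f : ℕ → B)
    (hf : ∀ j, f j ∈ W) : E CB e N f ∈ W := by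
  have hp : ∀ (l : ℕ) (v : B), v ∈ W → (CB.mul 0 e ^ l) v ∈ W := by
    intro l v hv
    induction l with
    | zero => simpa using hv
    | succ l ih =>
      rw [pow_succ', Module.End.mul_apply]
      exact hW _ ih
  exact W.sum_mem fun l _ => W.smul_mem _ (hp l _ (hf l))

/-- Elements of `K` on which the right action is `R_λ = R_0 + λ`. -/
def V (CB : ConfAlg F B) (K : Submodule F B) (e : B) : Submodule F B where
  carrier := {v | v ∈ K ∧ ∀ n, 1 ≤ n → CB.mul n v e = if n = 1 then v else 0}
  add_mem' := by
    rintro a b ⟨ha, ha'⟩ ⟨hb, hb'⟩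
    refine ⟨K.add_mem ha hb, fun n hn => ?_⟩
    rw [map_add, LinearMap.add_apply, ha' n hn, hb' n hn]
    split_ifs <;> simp
  zero_mem' := ⟨K.zero_mem, fun n hn => by simp⟩
  smul_mem' := by
    rintro c a ⟨ha, ha'⟩
    refine ⟨K.smul_mem c ha, fun n hn => ?_⟩
    rw [map_smul, LinearMap.smul_apply, ha' n hn]
    split_ifs <;> simp

theorem Lift.V_L0 (h : Lift CB K e) (v : B) (hv : v ∈ V CB K e) : CB.mul 0 e v ∈ V CB K e := by
  refine ⟨h.idl _ _ _ hv.1, fun n hn => ?_⟩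
  rw [CB.assoc]
  simp [hv.2 n hn]
  split_ifs <;> simp

theorem Lift.R_mem (h : Lift CB K e) (j : ℕ) (m : B) (hm : m ∈ K) :
    CB.mul j m e ∈ V CB K e := by
  refine ⟨h.idr _ _ _ hm, fun n hn => ?_⟩
  rw [CB.assoc]
  have hz : ∀ k i, 1 ≤ k → CB.mul i m (CB.mul k e e) = if k = 1 then CB.mul i m e else 0 := by
    intro k i hk
    rw [mul_ee k hk, map_add, h.sq _ _ _ hm (h.phi_mem _), zero_add]
    split_ifs <;> simp
  rw [sum_eq_single 0]
  · rw [hz _ _ (by omega)]; simp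
  · intro s _ hs
    rw [hz _ _ (by omega), if_neg (by omega), smul_zero]
  · simp

theorem Lift.add (h : Lift CB K e) (u : B) (hu : u ∈ K) : Lift CB K (e + u) where
  idl := h.idl
  idr := h.idr
  sq := h.sq
  h1 := by
    have : CB.mul 1 (e + u) (e + u) - (e + u) = (CB.mul 1 e e - e) +
      (CB.mul 1 e u + CB.mul 1 u e + CB.mul 1 u u - u) := by
      simp only [map_add, LinearMap.add_apply]; abel
    rw [this]
    exact K.add_mem h.h1 (K.sub_mem (K.add_mem (K.add_mem (h.idl _ _ _ hu) (h.idr _ _ _ hu))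
      (h.idl _ _ _ hu)) hu)
  h2 := by
    intro n hn
    simp only [map_add, LinearMap.add_apply]
    exact K.add_mem (K.add_mem (h.h2 n hn) (h.idr _ _ _ hu))
      (K.add_mem (h.idl _ _ _ hu) (h.idl _ _ _ hu))

theorem Lift.phi_add (h : Lift CB K e) (u : B) (hu : u ∈ K) (n : ℕ) (hn : 1 ≤ n) :
    phi CB (e + u) n = phi CB e n + CB.mul n e u + CB.mul n u e - if n = 1 then u else 0 := by
  have h0 : n ≠ 0 := by omega
  simp only [phi, if_neg h0, map_add, LinearMap.add_apply, h.sq n u u hu hu]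
  split_ifs <;> abel

theorem Lift.V_add (h : Lift CB K e) (u : B) (hu : u ∈ K) : V CB K (e + u) = V CB K e := by
  ext v
  constructor
  · rintro ⟨h1, h2⟩
    refine ⟨h1, fun n hn => ?_⟩
    rw [← h2 n hn, map_add, h.sq _ _ _ h1 hu, add_zero]
  · rintro ⟨h1, h2⟩
    refine ⟨h1, fun n hn => ?_⟩
    rw [← h2 n hn, map_add, h.sq _ _ _ h1 hu, add_zero]

theorem exists_bound (CB : ConfAlg F B) (e : B) : ∃ N, 1 ≤ N ∧ ∀ n, N ≤ n → phi CB e n = 0 := by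
  obtain ⟨N, hN⟩ := CB.locality e e
  refine ⟨N + 2, by omega, fun n hn => ?_⟩
  rw [phi, if_neg (by omega), if_neg (by omega), hN n (by omega), sub_zero]

theorem Lift.stepA [CharZero F] (h : Lift CB K e) :
    ∃ u ∈ K, ∀ n, phi CB (e + u) n ∈ V CB K (e + u) := by
  obtain ⟨N, hN1, hN⟩ := exists_bound CB e
  let u := E CB e N (fun l => phi CB e (l + 1))
  have hu : u ∈ K := E_mem K (fun v hv => h.idl _ _ _ hv) _ _ (fun j => h.phi_mem _)
  refine ⟨u, hu, fun n => ?_⟩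
  rw [h.V_add u hu]
  rcases Nat.eq_zero_or_pos n with rfl | hn
  · rw [phi_zero]; exact Submodule.zero_mem _
  have hn1 : 1 ≤ n := hn
  rw [h.phi_add u hu n hn]
  have key : CB.mul n e u + phi CB e n - (if n = 1 then u else 0) ∈ V CB K e := by
    have h1 := h.LE N n (fun l => phi CB e (l + 1)) (fun l => h.phi_mem _)
      (fun l hl => hN _ (by omega))
    let v : ℕ → B := fun j => ∑ i ∈ range (n + 1), ((-1 : F) ^ i * (n.choose i : F)) •
      ∑ s ∈ range (n - i + 1), ((n - i).choose s : F) •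
        CB.mul (i + j + 1 + s) (phi CB e (n - i - s)) e
    have hv : ∀ j, v j ∈ V CB K e := fun j =>
      Submodule.sum_mem _ fun i _ => Submodule.smul_mem _ _ <|
        Submodule.sum_mem _ fun s _ => Submodule.smul_mem _ _ (h.R_mem _ _ (h.phi_mem _))
    have h2 : (fun j => ∑ i ∈ range (n + 1), ((-1 : F) ^ i * (n.choose i : F)) •
        CB.mul (n - i) e (phi CB e (i + j + 1))) =
        fun j => ((if n = 1 then (1 : F) else 0) • phi CB e (j + 1) +
          (-1 : F) • (if j = 0 then phi CB e n else 0)) + v j := by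
      funext j
      have h3 : ∀ i ∈ range (n + 1), ((-1 : F) ^ i * (n.choose i : F)) •
        CB.mul (n - i) e (phi CB e (i + j + 1)) =
          ((-1 : F) ^ i * (n.choose i : F)) • CB.mul 0 e (phi CB e (n + j + 1)) +
          (((-1 : F) ^ i * (n.choose i : F)) * ((n - i : ℕ) : F)) • phi CB e (n + j) -
          (if i = 0 then (if j = 0 then phi CB e n else 0) else 0) +
          ((-1 : F) ^ i * (n.choose i : F)) •
            ∑ s ∈ range (n - i + 1), ((n - i).choose s : F) •
              CB.mul (i + j + 1 + s) (phi CB e (n - i - s)) e := by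
        intro i hi
        have hi' : i ≤ n := by simpa [Nat.lt_succ_iff] using hi
        rw [cocycle (n - i) (i + j + 1) (by omega), smul_add, smul_sub, smul_add, smul_smul,
          show n - i + (i + j + 1) = n + j + 1 by omega, show n + j + 1 - 1 = n + j by omega]
        congr 2
        by_cases hi0 : i = 0
        · subst hi0
          by_cases hj : j = 0
          · subst hj; simp
          · simp [hj]
        · rw [if_neg (by omega), if_neg hi0, smul_zero]
      rw [sum_congr rfl h3, sum_add_distrib, sum_sub_distrib, sum_add_distrib, ← sum_smul,
        ← sum_smul, alt_sum, alt_sum_lin n hn1, if_neg (by omega), zero_smul, zero_add]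
      simp only [v]
      congr 1
      rw [sum_ite_eq' (range (n + 1)) 0]
      by_cases h1 : n = 1
      · subst h1; by_cases hj : j = 0 <;> simp [hj, add_comm 1 j, sub_eq_add_neg]
      · by_cases hj : j = 0 <;> simp [h1, hj]
    rw [h2, E_add, E_add, E_smul, E_smul] at h1
    have h4 : E CB e N (fun j => if j = 0 then phi CB e n else 0) = phi CB e n := by
      rw [E, sum_eq_single 0]
      · simp
      · intro b _ hb; simp [hb]
      · intro h; simp at h; omega
    rw [h4] at h1
    change CB.mul n e u = _ • u + _ + _ at h1
    have h5 : CB.mul n e u + phi CB e n - (if n = 1 then u else 0) = E CB e N v := by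
      rw [h1]; split_ifs <;> simp only [one_smul, zero_smul, neg_smul] <;> abel
    rw [h5]
    exact E_mem _ h.V_L0 _ _ hv
  have h6 := Submodule.add_mem _ key (h.R_mem n u hu)
  convert h6 using 1
  abel

theorem Lift.stepB [CharZero F] (h : Lift CB K e) (hV : ∀ n, phi CB e n ∈ V CB K e) :
    ∃ u ∈ K, ∀ n, phi CB (e + u) n = 0 := by
  obtain ⟨N, hN1, hN⟩ := exists_bound CB e
  let f : ℕ → B := fun l => ((l + 1 : ℕ) : F)⁻¹ • phi CB e (l + 1)
  have hfV : ∀ l, f l ∈ V CB K e := fun l => Submodule.smul_mem _ _ (hV _)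
  let w := E CB e N f
  have hwV : w ∈ V CB K e := E_mem _ h.V_L0 _ _ hfV
  refine ⟨-w, K.neg_mem hwV.1, fun n => ?_⟩
  rcases Nat.eq_zero_or_pos n with rfl | hn
  · exact phi_zero
  have hn1 : 1 ≤ n := hn
  rw [h.phi_add _ (K.neg_mem hwV.1) n hn]
  have key : CB.mul n e w = phi CB e n := by
    have h1 := h.LE N n f (fun l => (hfV l).1) (fun l hl => by simp [f, hN (l + 1) (by omega)])
    have hc : ∀ a k, 1 ≤ k → CB.mul a e (phi CB e k) =
        CB.mul 0 e (phi CB e (a + k)) + (a : F) • phi CB e (a + k - 1) := by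
      intro a k hk
      rw [cocycle a k hk, sum_eq_single 0]
      · rw [(hV _).2 _ (by omega)]; by_cases hk1 : k = 1 <;> simp [hk1]
      · intro s _ hs
        rw [(hV _).2 _ (by omega), if_neg (by omega), smul_zero]
      · simp
    let c : ℕ → F := fun j => (j.factorial : F) * (n.factorial : F)
    have h2 : ∀ j, (∑ i ∈ range (n + 1), ((-1 : F) ^ i * (n.choose i : F)) •
        CB.mul (n - i) e (f (i + j))) =
        (c j / ((n + j + 1).factorial : F)) • CB.mul 0 e (phi CB e (n + j + 1)) +
        (c j / ((n + j).factorial : F)) • phi CB e (n + j) := by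
      intro j
      have h3 : ∀ i ∈ range (n + 1), ((-1 : F) ^ i * (n.choose i : F)) •
          CB.mul (n - i) e (f (i + j)) =
          (((-1 : F) ^ i * (n.choose i : F)) * ((i + j + 1 : ℕ) : F)⁻¹) •
            CB.mul 0 e (phi CB e (n + j + 1)) +
          ((((-1 : F) ^ i * (n.choose i : F)) * ((i + j + 1 : ℕ) : F)⁻¹) * (n + j + 1 : ℕ) -
            ((-1 : F) ^ i * (n.choose i : F))) • phi CB e (n + j) := by
        intro i hi
        have hi' : i ≤ n := by simpa [Nat.lt_succ_iff] using hi
        simp only [f, map_smul]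
        rw [hc _ _ (by omega), smul_smul, smul_add, smul_smul,
          show n - i + (i + j + 1) = n + j + 1 by omega, show n + j + 1 - 1 = n + j by omega]
        congr 2
        rw [Nat.cast_sub hi']
        have a2 : ((i + j + 1 : ℕ) : F) ≠ 0 := by exact_mod_cast (i + j).succ_ne_zero
        push_cast at a2 ⊢
        field_simp
        ring
      rw [sum_congr rfl h3, sum_add_distrib, ← sum_smul, ← sum_smul, sum_sub_distrib, ← sum_mul,
        alt_sum, alt_sum_beta, if_neg (by omega), sub_zero]
      congr 2
      have a1 : ((n + j).factorial : F) ≠ 0 := by exact_mod_cast (n + j).factorial_ne_zero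
      have a2 : ((n + j + 1 : ℕ) : F) ≠ 0 := by exact_mod_cast (n + j).succ_ne_zero
      rw [Nat.factorial_succ]
      push_cast at a2 ⊢
      field_simp
      rfl
    change CB.mul n e w = _ at h1
    rw [h1, E]
    let T : ℕ → B := fun j => (-1 : F) ^ j • ((n.factorial : F) / ((n + j).factorial : F)) •
      (CB.mul 0 e ^ j) (phi CB e (n + j))
    have h4 : ∀ l ∈ range N, ((-1 : F) ^ l / (l.factorial : F)) • (CB.mul 0 e ^ l)
        (∑ i ∈ range (n + 1), ((-1 : F) ^ i * (n.choose i : F)) •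
        CB.mul (n - i) e (f (i + l))) = T l - T (l + 1) := by
      intro l _
      have a1 : (l.factorial : F) ≠ 0 := by exact_mod_cast l.factorial_ne_zero
      rw [h2, map_add, map_smul, map_smul, smul_add, smul_smul, smul_smul, add_comm]
      simp only [T, smul_smul]
      rw [sub_eq_add_neg, ← neg_smul]
      congr 1
      · congr 1
        simp only [c]; field_simp
      · rw [pow_succ (CB.mul 0 e) l, Module.End.mul_apply, ← add_assoc n l 1]
        congr 1
        simp only [c, pow_succ]; field_simp
    rw [sum_congr rfl h4, sum_range_sub']
    simp only [T]
    rw [hN (n + N) (by omega)]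
    have a1 : (n.factorial : F) ≠ 0 := by exact_mod_cast n.factorial_ne_zero
    simp [a1]
  rw [map_neg, key, map_neg, LinearMap.neg_apply, hwV.2 n hn1]
  split_ifs <;> simp

theorem Lift.exists_good [CharZero F] (h : Lift CB K e) :
    ∃ u ∈ K, CB.mul 1 (e + u) (e + u) = e + u ∧ ∀ n, 2 ≤ n → CB.mul n (e + u) (e + u) = 0 := by
  obtain ⟨u, hu, hV⟩ := h.stepA
  obtain ⟨w, hw, hz⟩ := (h.add u hu).stepB hV
  refine ⟨u + w, K.add_mem hu hw, ?_, fun n hn => ?_⟩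
  · rw [← add_assoc]
    have := hz 1
    simpa [phi, sub_eq_zero] using this
  · rw [← add_assoc]
    have := hz n
    rwa [phi, if_neg (by omega), if_neg (by omega), sub_zero] at this

/-- Powers of `e`: `y k` stands for `e^(k+1)`. -/
def y (CB : ConfAlg F B) (e : B) (k : ℕ) : B := (CB.mul 0 e ^ k) e

theorem y_succ (k : ℕ) : y CB e (k + 1) = CB.mul 0 e (y CB e k) := by
  rw [y, pow_succ', Module.End.mul_apply]; rfl

theorem e_mul_y (h1 : CB.mul 1 e e = e) (h2 : ∀ n, 2 ≤ n → CB.mul n e e = 0) (l n : ℕ) :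
    CB.mul n e (y CB e l) = ((l + 1).descFactorial n : F) • y CB e (l + 1 - n) := by
  induction l generalizing n with
  | zero =>
    rcases n with _ | _ | n
    · simp [y]
    · simp [y, h1]
    · have : (0 + 1).descFactorial (n + 1 + 1) = 0 := by
        rw [Nat.descFactorial_eq_zero_iff_lt]; omega
      rw [this]; simp [y, h2]
  | succ l ih =>
    have hphi : ∀ k, phi CB e k = 0 := by
      rintro (_ | _ | k)
      · simp [phi]
      · simp [phi, h1]
      · simp [phi, h2]
    have hs := sum_split (CB := CB) (e := e) (fun s => (CB.mul (0 + s)).flip (y CB e l)) n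
    simp only [LinearMap.flip_apply] at hs
    rw [y_succ, assoc_inv, hs, CB.assoc]
    simp only [hphi, map_zero, LinearMap.zero_apply, smul_zero, sum_const_zero, zero_add,
      range_one, sum_singleton, pow_zero, Nat.choose_self, Nat.cast_one, mul_one, one_smul,
      Nat.sub_zero, add_zero]
    rw [ih, ih, map_smul, ← y_succ]
    rcases n with _ | n
    · simp
    · by_cases hn : n ≤ l
      · rw [show l + 1 - (n + 1 - 1) = l + 1 - n by omega,
          show l + 1 - (n + 1) + 1 = l + 1 - n by omega,
          show l + 1 + 1 - (n + 1) = l + 1 - n by omega, smul_smul, ← add_smul]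
        congr 1
        rw [Nat.add_sub_cancel, Nat.succ_descFactorial_succ (l + 1) n, Nat.descFactorial_succ,
          Nat.cast_mul, Nat.cast_mul, Nat.cast_sub (by omega)]
        push_cast; ring
      · have e1 : (l + 1).descFactorial (n + 1) = 0 := by
          rw [Nat.descFactorial_eq_zero_iff_lt]; omega
        rw [e1, Nat.cast_zero, zero_smul, add_zero, Nat.succ_descFactorial_succ, smul_smul,
          show l + 1 - (n + 1 - 1) = l + 1 + 1 - (n + 1) by omega]
        by_cases hn2 : n = l + 1
        · subst hn2; simp
        · have e2 : (l + 1).descFactorial n = 0 := by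
            rw [Nat.descFactorial_eq_zero_iff_lt]; omega
          simp [e2]

theorem y_mul_mem (h1 : CB.mul 1 e e = e) (h2 : ∀ n, 2 ≤ n → CB.mul n e e = 0) (W : Submodule F B)
    (hW : ∀ k, y CB e k ∈ W) (k l n : ℕ) :
    ∃ (c : F) (j : ℕ), CB.mul n (y CB e k) (y CB e l) = c • y CB e j := by
  induction k with
  | zero => exact ⟨_, _, e_mul_y h1 h2 l n⟩
  | succ k ih =>
    obtain ⟨c, j, hj⟩ := ih
    rw [y_succ, CB.assoc]
    refine ⟨c, j + 1, ?_⟩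
    simp [hj, y_succ]

end

theorem final {A : Type*} [AddCommGroup A] [Module F A]
    (CA : ConfAlg F A) (xB : ℕ → A) (hX : IsCend1x CA xB)
    (CB : ConfAlg F B) (σ : B →ₗ[F] A)
    (hσD : ∀ b : B, σ (CB.D b) = CA.D (σ b))
    (hσmul : ∀ (n : ℕ) (a b : B), σ (CB.mul n a b) = CA.mul n (σ a) (σ b))
    (e : B) (he : σ e = xB 1)
    (h1 : CB.mul 1 e e = e) (h2 : ∀ n, 2 ≤ n → CB.mul n e e = 0) :
    ∃ S : Submodule F B,
      (∀ b ∈ S, CB.D b ∈ S) ∧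
      (∀ n : ℕ, ∀ a ∈ S, ∀ b ∈ S, CB.mul n a b ∈ S) ∧
      Function.Bijective (fun s : S => σ s.1) ∧
      S ⊓ LinearMap.ker σ = ⊥ ∧ S ⊔ LinearMap.ker σ = ⊤ := by
  obtain ⟨hli, hsp, hmul⟩ := hX
  let g : ℕ × {k : ℕ // 1 ≤ k} → B := fun p => (CB.D ^ p.1) (y CB e (p.2.1 - 1))
  let f : ℕ × {k : ℕ // 1 ≤ k} → A := fun p => (CA.D ^ p.1) (xB p.2.1)
  have hy : ∀ k, σ (y CB e k) = xB (k + 1) := by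
    intro k
    induction k with
    | zero => simpa [y] using he
    | succ k ih =>
      rw [y_succ, hσmul, ih, he, hmul 1 (k + 1) 0 le_rfl (by omega)]
      simp [add_comm 1 (k + 1)]
  have hDp : ∀ (i : ℕ) (b : B), σ ((CB.D ^ i) b) = (CA.D ^ i) (σ b) := by
    intro i b
    induction i with
    | zero => simp
    | succ i ih => rw [pow_succ', pow_succ', Module.End.mul_apply, Module.End.mul_apply, hσD, ih]
  have hg : ∀ p, σ (g p) = f p := by
    rintro ⟨i, k, hk⟩
    simp only [g, f, hDp, hy]
    rw [Nat.sub_add_cancel hk]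
  let S := Submodule.span F (Set.range g)
  have hgS : ∀ i k, (CB.D ^ i) (y CB e k) ∈ S := by
    intro i k
    exact Submodule.subset_span ⟨(i, ⟨k + 1, by omega⟩), by simp [g]⟩
  have hyS : ∀ k, y CB e k ∈ S := fun k => by simpa using hgS 0 k
  have hD : ∀ b ∈ S, CB.D b ∈ S := by
    intro b hb
    have : S ≤ S.comap CB.D := by
      refine Submodule.span_le.2 ?_
      rintro _ ⟨p, rfl⟩
      have := hgS (p.1 + 1) (p.2.1 - 1)
      rwa [pow_succ', Module.End.mul_apply] at this
    exact this hb
  have hgen : ∀ (i j n k l : ℕ),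
      CB.mul n ((CB.D ^ i) (y CB e k)) ((CB.D ^ j) (y CB e l)) ∈ S := by
    intro i
    induction i with
    | zero =>
      intro j
      induction j with
      | zero =>
        intro n k l
        obtain ⟨c, j, hj⟩ := y_mul_mem h1 h2 S hyS k l n
        simpa [hj] using S.smul_mem c (hyS j)
      | succ j ih =>
        intro n k l
        rw [pow_succ' CB.D j, Module.End.mul_apply, CB.D_right]
        exact S.add_mem (hD _ (ih _ _ _)) (S.smul_mem _ (ih _ _ _))
    | succ i ih =>
      intro j n k l
      rw [pow_succ' CB.D i, Module.End.mul_apply, CB.D_left]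
      exact S.neg_mem (S.smul_mem _ (ih _ _ _ _))
  have hM : ∀ n : ℕ, ∀ a ∈ S, ∀ b ∈ S, CB.mul n a b ∈ S := by
    intro n a ha b hb
    have s1 : ∀ p, S ≤ S.comap (CB.mul n (g p)) := by
      intro p
      refine Submodule.span_le.2 ?_
      rintro _ ⟨q, rfl⟩
      exact hgen _ _ _ _ _
    have s2 : S ≤ S.comap ((CB.mul n).flip b) := by
      refine Submodule.span_le.2 ?_
      rintro _ ⟨p, rfl⟩
      exact s1 p hb
    exact s2 ha
  have hinj : ∀ s ∈ S, σ s = 0 → s = 0 := by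
    intro s hs h0
    obtain ⟨c, rfl⟩ := (Finsupp.mem_span_range_iff_exists_finsupp).1 hs
    have hc : c.sum (fun i a => a • f i) = 0 := by
      rw [← h0, Finsupp.sum, Finsupp.sum, map_sum]
      exact sum_congr rfl fun i _ => by rw [map_smul, hg]
    have := linearIndependent_iff.1 hli c (by rw [Finsupp.linearCombination_apply]; exact hc)
    rw [this]; simp
  have hsurj : ∀ a : A, ∃ s ∈ S, σ s = a := by
    intro a
    have : Submodule.span F (Set.range f) ≤ S.map σ := by
      refine Submodule.span_le.2 ?_
      rintro _ ⟨p, rfl⟩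
      exact ⟨g p, Submodule.subset_span ⟨p, rfl⟩, hg p⟩
    have ha : a ∈ Submodule.span F (Set.range f) := by
      have : Submodule.span F (Set.range f) = ⊤ := hsp
      rw [this]; trivial
    exact this ha
  refine ⟨S, hD, hM, ⟨?_, ?_⟩, ?_, ?_⟩
  · rintro ⟨a, ha⟩ ⟨b, hb⟩ hab
    have := hinj (a - b) (S.sub_mem ha hb) (by rw [map_sub]; exact sub_eq_zero.2 hab)
    exact Subtype.ext (sub_eq_zero.1 this)
  · intro a
    obtain ⟨s, hs, h⟩ := hsurj a
    exact ⟨⟨s, hs⟩, h⟩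
  · rw [eq_bot_iff]
    rintro s ⟨hs, hk⟩
    exact hinj s hs hk
  · rw [eq_top_iff]
    intro b _
    obtain ⟨s, hs, h⟩ := hsurj (σ b)
    rw [Submodule.mem_sup]
    exact ⟨s, hs, b - s, by simp [h], by abel⟩

end CendSplit

/-- **Theorem.** `Cend_{1,x}` splits off in every singular extension: for every
associative conformal algebra `B` and surjective conformal-algebra homomorphism
`σ : B → Cend_{1,x}` whose kernel squares to zero (for all `∘ₙ`), there is a
conformal subalgebra `S ⊆ B` such that `σ` restricts to an isomorphism of `S`
onto `Cend_{1,x}` and `B = S ⊕ ker σ` as `F[D]`-modules. -/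
theorem Cend1x_splits_in_singular_extensions {F : Type*} [Field F] [CharZero F]
    {A : Type*} [AddCommGroup A] [Module F A]
    {B : Type*} [AddCommGroup B] [Module F B]
    (CA : ConfAlg F A) (xB : ℕ → A) (hX : IsCend1x CA xB)
    (CB : ConfAlg F B) (σ : B →ₗ[F] A)
    (hσD : ∀ b : B, σ (CB.D b) = CA.D (σ b))
    (hσmul : ∀ (n : ℕ) (a b : B), σ (CB.mul n a b) = CA.mul n (σ a) (σ b))
    (hσsurj : Function.Surjective σ)
    (hsing : ∀ n : ℕ, ∀ a ∈ LinearMap.ker σ, ∀ b ∈ LinearMap.ker σ, CB.mul n a b = 0) :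
    ∃ S : Submodule F B,
      (∀ b ∈ S, CB.D b ∈ S) ∧
      (∀ n : ℕ, ∀ a ∈ S, ∀ b ∈ S, CB.mul n a b ∈ S) ∧
      Function.Bijective (fun s : S => σ s.1) ∧
      S ⊓ LinearMap.ker σ = ⊥ ∧ S ⊔ LinearMap.ker σ = ⊤ := by
  obtain ⟨e, he⟩ := hσsurj (xB 1)
  have hx : ∀ n, CA.mul n (xB 1) (xB 1) = (Nat.descFactorial 1 n : F) • xB (1 + 1 - n) :=
    fun n => hX.2.2 1 1 n le_rfl le_rfl
  have hl : CendSplit.Lift CB (LinearMap.ker σ) e :=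
    { idl := by
        intro n b m hm
        rw [LinearMap.mem_ker] at hm ⊢
        rw [hσmul, hm, map_zero]
      idr := by
        intro n m b hm
        rw [LinearMap.mem_ker] at hm ⊢
        rw [hσmul, hm, map_zero, LinearMap.zero_apply]
      sq := fun n a b ha hb => hsing n a ha b hb
      h1 := by
        rw [LinearMap.mem_ker, map_sub, hσmul, he, hx]
        simp
      h2 := by
        intro n hn
        have : Nat.descFactorial 1 n = 0 := by
          rw [Nat.descFactorial_eq_zero_iff_lt]; omega
        rw [LinearMap.mem_ker, hσmul, he, hx, this]
        simp }
  obtain ⟨u, hu, h1, h2⟩ := hl.exists_good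
  refine CendSplit.final CA xB hX CB σ hσD hσmul (e + u) ?_ h1 h2
  rw [map_add, he, LinearMap.mem_ker.1 hu, add_zero]
end

section
/- Every 2-cocycle of Cend_{1,x} with values in a conformal bimodule M is completely determined by the elements φ_t(x, x), t ≥ 1, and φ₀(x, x^l), l ≥ 1, of M: if φ and φ' are 2-cocycles of Cend_{1,x} with values in M satisfying φ_t(x, x) = φ'_t(x, x) for all t ≥ 1 and φ₀(x, x^l) = φ'₀(x, x^l) for all l ≥ 1, then φ_s(a, b) = φ'_s(a, b) for all a, b ∈ Cend_{1,x} and all s ∈ ℤ₊. -/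
open Finset

/-- **Lemma 1.** A 2-cocycle of `Cend_{1,x}` with values in a conformal bimodule `M`
is completely determined by the elements `φ_t(x, x)`, `t ≥ 1`, and `φ₀(x, x^l)`,
`l ≥ 1`: two 2-cocycles agreeing on these values agree everywhere. -/
theorem cocycle_determined_by_values {F : Type*} [Field F] [CharZero F]
    {A : Type*} [AddCommGroup A] [Module F A]
    {M : Type*} [AddCommGroup M] [Module F M]
    (CA : ConfAlg F A) (xB : ℕ → A) (hX : IsCend1x CA xB)
    (B : ConfBimod CA M) (φ φ' : Cochain2 CA B)
    (hφ : IsCocycle φ) (hφ' : IsCocycle φ')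
    (h1 : ∀ t : ℕ, 1 ≤ t → φ.f t (xB 1) (xB 1) = φ'.f t (xB 1) (xB 1))
    (h2 : ∀ l : ℕ, 1 ≤ l → φ.f 0 (xB 1) (xB l) = φ'.f 0 (xB 1) (xB l)) :
    ∀ (s : ℕ) (a b : A), φ.f s a b = φ'.f s a b := by
  obtain ⟨-, hspan, hmul⟩ := hX
  obtain ⟨g, hg⟩ : ∃ g : ℕ → A →ₗ[F] A →ₗ[F] M, ∀ n, g n = φ.f n - φ'.f n := ⟨_, fun _ => rfl⟩
  have hgl : ∀ n a b, g n (CA.D a) b = -((n : F) • g (n - 1) a b) := by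
    intro n a b
    simp only [hg, LinearMap.sub_apply, φ.D_left, φ'.D_left, smul_sub]
    abel
  have hgr : ∀ n a b, g n a (CA.D b) = B.D (g n a b) + (n : F) • g (n - 1) a b := by
    intro n a b
    simp only [hg, LinearMap.sub_apply, φ.D_right, φ'.D_right, smul_sub, map_sub]
    abel
  have hgc : ∀ (n m : ℕ) (a b c : A),
      B.lmul n a (g m b c) + g n a (CA.mul m b c) =
      ∑ s ∈ Finset.range (n + 1), (n.choose s : F) •
        (g (m + s) (CA.mul (n - s) a b) c + B.rmul (m + s) (g (n - s) a b) c) := by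
    intro n m a b c
    have e1 := hφ n m a b c
    have e2 := hφ' n m a b c
    have e3 : B.lmul n a (g m b c) + g n a (CA.mul m b c) =
        (B.lmul n a (φ.f m b c) + φ.f n a (CA.mul m b c)) -
        (B.lmul n a (φ'.f m b c) + φ'.f n a (CA.mul m b c)) := by
      simp only [hg, LinearMap.sub_apply, map_sub]
      abel
    rw [e3, e1, e2, ← Finset.sum_sub_distrib]
    refine Finset.sum_congr rfl fun s _ => ?_
    rw [← smul_sub]
    simp only [hg, LinearMap.sub_apply, map_sub]
    congr 1
    abel
  have g0 : ∀ l, 1 ≤ l → g 0 (xB 1) (xB l) = 0 := by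
    intro l hl
    rw [hg, LinearMap.sub_apply, LinearMap.sub_apply, h2 l hl, sub_self]
  have g1 : ∀ t, g t (xB 1) (xB 1) = 0 := by
    intro t
    rcases Nat.eq_zero_or_pos t with rfl | ht
    · exact g0 1 le_rfl
    · rw [hg, LinearMap.sub_apply, LinearMap.sub_apply, h1 t ht, sub_self]
  -- `φ_n(x, x^l) = 0`
  have P : ∀ l, 1 ≤ l → ∀ n, g n (xB 1) (xB l) = 0 := by
    intro l hl
    induction l, hl using Nat.le_induction with
    | base => exact g1
    | succ l hl ih =>
      have Q : ∀ m, g m (xB 2) (xB l) = 0 := by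
        intro m
        have e := hgc 0 m (xB 1) (xB 1) (xB l)
        have z : g 0 (xB 1) (CA.mul m (xB 1) (xB l)) = 0 := by
          rw [hmul 1 l m le_rfl hl, map_smul]
          by_cases hm : m ≤ l
          · rw [g0 _ (by omega), smul_zero]
          · rw [Nat.descFactorial_of_lt (by omega)]
            simp
        have hx : CA.mul 0 (xB 1) (xB 1) = xB 2 := by
          rw [hmul 1 1 0 le_rfl le_rfl]; simp
        simpa [z, ih, g1, hx] using e.symm
      intro n
      have e := hgc n 0 (xB 1) (xB 1) (xB l)
      have hx : CA.mul 0 (xB 1) (xB l) = xB (l + 1) := by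
        rw [hmul 1 l 0 le_rfl hl]; simp [add_comm]
      rw [ih, map_zero, zero_add, hx] at e
      rw [e]
      refine Finset.sum_eq_zero fun s _ => ?_
      rw [g1, map_zero, LinearMap.zero_apply, add_zero, hmul 1 1 _ le_rfl le_rfl]
      rcases h : n - s with _ | _ | j
      · simp [Q]
      · simp [ih]
      · rw [Nat.descFactorial_of_lt (by omega)]
        simp
  have R : ∀ k, 1 ≤ k → ∀ l, 1 ≤ l → ∀ n, g n (xB k) (xB l) = 0 := by
    intro k hk
    induction k, hk using Nat.le_induction with
    | base => exact P
    | succ k hk ih =>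
      intro l hl m
      have e := hgc 0 m (xB 1) (xB k) (xB l)
      have z : g 0 (xB 1) (CA.mul m (xB k) (xB l)) = 0 := by
        rw [hmul k l m hk hl, map_smul]
        by_cases hm : m ≤ l
        · rw [g0 _ (by omega), smul_zero]
        · rw [Nat.descFactorial_of_lt (by omega)]
          simp
      have hx : CA.mul 0 (xB 1) (xB k) = xB (k + 1) := by
        rw [hmul 1 k 0 le_rfl hk]; simp [add_comm]
      simpa [z, ih l hl, P k hk, hx] using e.symm
  have S : ∀ k, 1 ≤ k → ∀ l, 1 ≤ l → ∀ j n, g n (xB k) ((CA.D ^ j) (xB l)) = 0 := by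
    intro k hk l hl j
    induction j with
    | zero => intro n; simpa using R k hk l hl n
    | succ j ih => intro n; rw [pow_succ', Module.End.mul_apply, hgr, ih, ih]; simp
  have T : ∀ k, 1 ≤ k → ∀ l, 1 ≤ l → ∀ j i n,
      g n ((CA.D ^ i) (xB k)) ((CA.D ^ j) (xB l)) = 0 := by
    intro k hk l hl j i
    induction i with
    | zero => intro n; simpa using S k hk l hl j n
    | succ i ih => intro n; rw [pow_succ', Module.End.mul_apply, hgl, ih]; simp
  have Z : ∀ n, g n = 0 := by
    intro n
    refine LinearMap.ext_on_range hspan fun p => ?_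
    refine LinearMap.ext_on_range hspan fun q => ?_
    simpa using T _ p.2.2 _ q.2.2 q.1 p.1 n
  intro s a b
  have := Z s
  rw [hg, sub_eq_zero] at this
  rw [this]
end

section
/- Let φ be a 2-cocycle of Cend_{1,x} with values in a conformal bimodule M. If φ₁(x, x) = 0 and φ₀(x, x^l) = 0 for every l ≥ 1, then φ = 0, i.e. φ_s(a, b) = 0 for all a, b ∈ Cend_{1,x} and all s ∈ ℤ₊. -/
open Finset

/-- **Lemma 2.** Let `φ` be a 2-cocycle of `Cend_{1,x}` with values in a conformal
bimodule `M`. If `φ₁(x, x) = 0` and `φ₀(x, x^l) = 0` for every `l ≥ 1`, then `φ = 0`. -/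
theorem cocycle_eq_zero_of_values_zero {F : Type*} [Field F] [CharZero F]
    {A : Type*} [AddCommGroup A] [Module F A]
    {M : Type*} [AddCommGroup M] [Module F M]
    (CA : ConfAlg F A) (xB : ℕ → A) (hX : IsCend1x CA xB)
    (B : ConfBimod CA M) (φ : Cochain2 CA B) (hφ : IsCocycle φ)
    (h1 : φ.f 1 (xB 1) (xB 1) = 0)
    (h2 : ∀ l : ℕ, 1 ≤ l → φ.f 0 (xB 1) (xB l) = 0) :
    ∀ (s : ℕ) (a b : A), φ.f s a b = 0 := by
  obtain ⟨-, hspan, hmul⟩ := hX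
  have hm0 : CA.mul 0 (xB 1) (xB 1) = xB 2 := by
    have := hmul 1 1 0 le_rfl le_rfl
    simpa using this
  have hm1 : CA.mul 1 (xB 1) (xB 1) = xB 1 := by
    have := hmul 1 1 1 le_rfl le_rfl
    simpa using this
  have hm2 : ∀ k, 2 ≤ k → CA.mul k (xB 1) (xB 1) = 0 := by
    intro k hk
    rw [hmul 1 1 k le_rfl le_rfl, Nat.descFactorial_eq_zero_iff_lt.2 (by omega)]
    simp
  have h0mul : ∀ s l, 1 ≤ l → φ.f 0 (xB 1) (CA.mul s (xB 1) (xB l)) = 0 := by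
    intro s l hl
    rw [hmul 1 l s le_rfl hl, map_smul]
    by_cases h : s ≤ l
    · rw [h2 _ (by omega), smul_zero]
    · rw [Nat.descFactorial_eq_zero_iff_lt.2 (by omega)]
      simp
  -- right multiplication relations
  have hRR : ∀ k m (u : M), 2 ≤ k → B.rmul k (B.rmul m u (xB 1)) (xB 1) = 0 := by
    intro k m u hk
    rw [B.assoc_uaa]
    refine Finset.sum_eq_zero fun s _ => ?_
    rw [hm2 _ (by omega), map_zero, smul_zero]
  have hR1 : ∀ m (u : M), B.rmul 1 (B.rmul m u (xB 1)) (xB 1) = B.rmul m u (xB 1) := by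
    intro m u
    rw [B.assoc_uaa, Finset.sum_eq_single 0]
    · simp [hm1]
    · intro s _ hs
      rw [hm2 _ (by omega), map_zero, smul_zero]
    · simp
  have hLR : ∀ k (u : M), B.rmul k (B.lmul 0 (xB 1) u) (xB 1)
      = B.lmul 0 (xB 1) (B.rmul k u (xB 1)) := by
    intro k u
    rw [B.assoc_aua]
    simp
  have desc : ∀ P : ℕ → Prop, (∃ N, ∀ n, N ≤ n → P n) → (∀ n, P (n + 1) → P n) → ∀ n, P n := by
    rintro P ⟨N, hN⟩ hstep n
    have : ∀ d n, N ≤ n + d → P n := by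
      intro d
      induction d with
      | zero => intro n hn; exact hN n hn
      | succ d ih => intro n hn; exact hstep n (ih (n + 1) (by omega))
    exact this N n (by omega)
  obtain ⟨N, hN⟩ := φ.loc (xB 1) (xB 1)
  have h0 := h2 1 le_rfl
  have hx2 : ∀ s, φ.f s (xB 2) (xB 1) = B.lmul 0 (xB 1) (φ.f s (xB 1) (xB 1)) := by
    intro s
    have := hφ 0 s (xB 1) (xB 1) (xB 1)
    simp [h0mul s 1 le_rfl, hm0, h0] at this
    exact this.symm
  have E : ∀ n, φ.f n (xB 1) (xB 1) = B.lmul 0 (xB 1) (φ.f (n + 1) (xB 1) (xB 1))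
      + (n : F) • φ.f n (xB 1) (xB 1)
      + ∑ s ∈ Finset.range (n + 1), (n.choose s : F) •
        B.rmul (1 + s) (φ.f (n - s) (xB 1) (xB 1)) (xB 1) := by
    intro n
    have := hφ n 1 (xB 1) (xB 1) (xB 1)
    rw [h1, map_zero, zero_add, hm1] at this
    simp only [smul_add, Finset.sum_add_distrib] at this
    rw [this]
    congr 1
    rw [← this]
    rcases n with _ | n
    · simp [hm0, hx2, h0]
    · rw [Finset.sum_range_succ, Finset.sum_range_succ, Finset.sum_eq_zero]
      · simp [hm0, hm1, hx2, add_comm, add_left_comm]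
      · intro s hs
        rw [Finset.mem_range] at hs
        rw [hm2 _ (by omega)]
        simp
  have A1 : ∀ k, 2 ≤ k → ∀ n, B.rmul k (φ.f n (xB 1) (xB 1)) (xB 1) = 0 := by
    intro k hk
    apply desc
    · exact ⟨N, fun n hn => by simp [hN n hn]⟩
    · intro n ih
      by_cases hn : n = 1
      · subst hn; simp [h1]
      have e := congrArg (fun u => B.rmul k u (xB 1)) (E n)
      simp only [map_add, map_smul, map_sum, LinearMap.add_apply, LinearMap.smul_apply,
        LinearMap.sum_apply, hRR k _ _ hk, hLR, ih, map_zero, smul_zero,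
        Finset.sum_const_zero, zero_add, add_zero] at e
      have e2 : ((1 : F) - n) • B.rmul k (φ.f n (xB 1) (xB 1)) (xB 1) = 0 := by
        rw [sub_smul, one_smul, sub_eq_zero]; exact e
      refine (smul_eq_zero.1 e2).resolve_left fun h => hn ?_
      exact_mod_cast (sub_eq_zero.1 h).symm
  have E' : ∀ n, φ.f n (xB 1) (xB 1) = B.lmul 0 (xB 1) (φ.f (n + 1) (xB 1) (xB 1))
      + (n : F) • φ.f n (xB 1) (xB 1) + B.rmul 1 (φ.f n (xB 1) (xB 1)) (xB 1) := by
    intro n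
    have e := E n
    rw [Finset.sum_eq_single 0] at e
    · simpa using e
    · intro s _ hs
      rw [A1 _ (by omega), smul_zero]
    · simp
  have A2 : ∀ n, B.rmul 1 (φ.f n (xB 1) (xB 1)) (xB 1) = 0 := by
    apply desc
    · exact ⟨N, fun n hn => by simp [hN n hn]⟩
    · intro n ih
      by_cases hn : n = 0
      · subst hn; simp [h0]
      have e := congrArg (fun u => B.rmul 1 u (xB 1)) (E' n)
      simp only [map_add, map_smul, LinearMap.add_apply, LinearMap.smul_apply, hR1, hLR, ih,
        map_zero, zero_add, right_eq_add] at e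
      exact (smul_eq_zero.1 e).resolve_left (by exact_mod_cast hn)
  have A3 : ∀ n, φ.f n (xB 1) (xB 1) = 0 := by
    apply desc
    · exact ⟨N, hN⟩
    · intro n ih
      by_cases hn : n = 1
      · subst hn; exact h1
      have e := E' n
      rw [A2, ih, map_zero, zero_add, add_zero] at e
      have e2 : ((1 : F) - n) • φ.f n (xB 1) (xB 1) = 0 := by
        rw [sub_smul, one_smul, sub_eq_zero]; exact e
      refine (smul_eq_zero.1 e2).resolve_left fun h => hn ?_
      exact_mod_cast (sub_eq_zero.1 h).symm
  -- Step 2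
  have B1 : ∀ l n, φ.f n (xB 1) (xB (l + 1)) = 0 := by
    intro l
    induction l with
    | zero => exact A3
    | succ l ih =>
      have q2 : ∀ s, φ.f s (xB 2) (xB (l + 1)) = 0 := by
        intro s
        have := hφ 0 s (xB 1) (xB 1) (xB (l + 1))
        simpa [h0mul s (l + 1) (by omega), hm0, ih, h0] using this.symm
      have q : ∀ s j, φ.f s (CA.mul j (xB 1) (xB 1)) (xB (l + 1)) = 0 := by
        intro s j
        rcases j with _ | _ | j
        · rw [hm0, q2]
        · rw [hm1, ih]
        · rw [hm2 _ (by omega)]; simp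
      intro n
      have := hφ n 0 (xB 1) (xB 1) (xB (l + 1))
      rw [hmul 1 (l + 1) 0 le_rfl (by omega)] at this
      simpa [q, A3, ih, add_comm 1 (l + 1)] using this
  have ind : ∀ p : A → Prop, p 0 → (∀ a b, p a → p b → p (a + b)) →
      (∀ (c : F) a, p a → p (c • a)) → (∀ a, p a → p (CA.D a)) → (∀ k, p (xB (k + 1))) →
      ∀ a, p a := by
    intro p p0 padd psm pD px a
    have ha : a ∈ Submodule.span F
      (Set.range fun p : ℕ × {k : ℕ // 1 ≤ k} => (CA.D ^ p.1) (xB p.2.1)) := by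
      rw [hspan]; trivial
    induction ha using Submodule.span_induction with
    | zero => exact p0
    | add a b _ _ ha hb => exact padd a b ha hb
    | smul c a _ ha => exact psm c a ha
    | mem a ha =>
      obtain ⟨⟨i, k, hk⟩, rfl⟩ := ha
      obtain ⟨k, rfl⟩ := Nat.exists_eq_add_of_le' hk
      dsimp only
      induction i with
      | zero => simpa using px k
      | succ i ih => rw [pow_succ']; exact pD _ ih
  have C1 : ∀ b n, φ.f n (xB 1) b = 0 := by
    apply ind
    · simp
    · intro a b ha hb n; simp [ha, hb]
    · intro c a ha n; simp [ha]
    · intro a ha n; simp [φ.D_right, ha]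
    · exact B1
  have C2 : ∀ k b n, φ.f n (xB (k + 1)) b = 0 := by
    intro k
    induction k with
    | zero => exact C1
    | succ k ih =>
      intro b n
      have := hφ 0 n (xB 1) (xB (k + 1)) b
      simpa [C1, ih, hmul, add_comm 1 (k + 1)] using this.symm
  intro s a b
  revert s b
  revert a
  apply ind
  · simp
  · intro a b ha hb s c; simp [ha, hb]
  · intro c a ha s b; simp [ha]
  · intro a ha s b; simp [φ.D_left, ha]
  · intro k s b; exact C2 k b s
end

section
/- Let φ be a 2-cocycle of Cend_{1,x} with values in a conformal bimodule M. If there exists an element ψ₁ ∈ M such that φ₁(x, x) = x ∘₁ ψ₁ − ψ₁ + ψ₁ ∘₁ x, then φ is a 2-coboundary. -/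
open Finset

/-- Binomial inversion. -/
theorem binom_inversion {F : Type*} [Field F] {V : Type*} [AddCommGroup V] [Module F V]
    (S T : ℕ → ℕ → V)
    (h : ∀ n m, T n m = ∑ s ∈ Finset.range (n + 1),
      ((-1 : F) ^ s * (n.choose s : F)) • S (n - s) (m + s)) (n m : ℕ) :
    S n m = ∑ s ∈ Finset.range (n + 1), (n.choose s : F) • T (n - s) (m + s) := by
  have e1 : ∑ s ∈ Finset.range (n + 1), (n.choose s : F) • T (n - s) (m + s)
      = ∑ s ∈ Finset.range (n + 1), ∑ t ∈ Finset.range (n + 1 - s),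
        ((n.choose (s + t) : F) * (((s + t).choose s : F) * (-1) ^ t)) •
          S (n - (s + t)) (m + (s + t)) := by
    refine Finset.sum_congr rfl fun s hs => ?_
    have hs' : s ≤ n := by simpa [Nat.lt_succ_iff] using hs
    rw [h, Finset.smul_sum, show n - s + 1 = n + 1 - s by omega]
    refine Finset.sum_congr rfl fun t ht => ?_
    have ht' : s + t ≤ n := by have := Finset.mem_range.1 ht; omega
    have hc := Nat.choose_mul (n := n) (k := s + t) (s := s) (Nat.le_add_right s t)
    rw [Nat.add_sub_cancel_left] at hc
    have hc' : (n.choose (s + t) : F) * ((s + t).choose s : F)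
      = (n.choose s : F) * ((n - s).choose t : F) := by
      rw [← Nat.cast_mul, hc, Nat.cast_mul]
    rw [smul_smul, ← mul_assoc (n.choose (s + t) : F), hc', Nat.sub_sub, add_assoc]
    congr 1
    ring
  rw [e1, Finset.sum_sigma']
  have e2 : ∑ r ∈ Finset.range (n + 1), ∑ s ∈ Finset.range (r + 1),
      ((n.choose r : F) * ((r.choose s : F) * (-1) ^ (r - s))) • S (n - r) (m + r) = S n m := by
    rw [Finset.sum_eq_single 0]
    · simp
    · intro r _ hr
      rw [← Finset.sum_smul, ← Finset.mul_sum]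
      have := add_pow (1 : F) (-1) r
      rw [add_neg_cancel, zero_pow hr] at this
      have h2 : ∑ s ∈ Finset.range (r + 1), ((r.choose s : F) * (-1) ^ (r - s)) = 0 := by
        rw [this]
        refine Finset.sum_congr rfl fun s _ => ?_
        rw [one_pow, one_mul, mul_comm]
      rw [h2, mul_zero, zero_smul]
    · intro h; simp at h
  rw [← e2, Finset.sum_sigma']
  refine Finset.sum_bij' (fun p _ => ⟨p.2, p.1 - p.2⟩) (fun p _ => ⟨p.1 + p.2, p.1⟩) ?_ ?_ ?_ ?_ ?_
  · rintro ⟨r, s⟩ hp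
    simp only [Finset.mem_sigma, Finset.mem_range] at hp ⊢
    omega
  · rintro ⟨r, s⟩ hp
    simp only [Finset.mem_sigma, Finset.mem_range] at hp ⊢
    omega
  · rintro ⟨r, s⟩ hp
    simp only [Finset.mem_sigma, Finset.mem_range] at hp ⊢
    rw [Nat.add_sub_cancel' (by omega)]
  · rintro ⟨r, s⟩ hp
    simp
  · rintro ⟨r, s⟩ hp
    simp only [Finset.mem_sigma, Finset.mem_range] at hp ⊢
    rw [Nat.add_sub_cancel' (by omega)]

section Ext

variable {F : Type*} [Field F] {A : Type*} [AddCommGroup A] [Module F A]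
    {M : Type*} [AddCommGroup M] [Module F M]
    {CA : ConfAlg F A} {B : ConfBimod CA M}

/-- The product on the extension of `A` by `M` defined by `φ`. -/
def extMul (φ : Cochain2 CA B) (n : ℕ) : (A × M) →ₗ[F] (A × M) →ₗ[F] (A × M) :=
  LinearMap.mk₂ F
    (fun p q => (CA.mul n p.1 q.1, φ.f n p.1 q.1 + B.lmul n p.1 q.2 + B.rmul n p.2 q.1))
    (by
      intro p p' q
      ext
      · simp
      · simp; abel)
    (by intro c p q; ext <;> simp)
    (by
      intro p p' q
      ext
      · simp
      · simp; abel)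
    (by intro c p q; ext <;> simp)

theorem extMul_apply (φ : Cochain2 CA B) (n : ℕ) (p q : A × M) :
    extMul φ n p q =
      (CA.mul n p.1 q.1, φ.f n p.1 q.1 + B.lmul n p.1 q.2 + B.rmul n p.2 q.1) := rfl

theorem extMul_assoc (φ : Cochain2 CA B) (hφ : IsCocycle φ) (n m : ℕ) (p q r : A × M) :
    extMul φ n p (extMul φ m q r) =
      ∑ s ∈ Finset.range (n + 1), (n.choose s : F) •
        extMul φ (m + s) (extMul φ (n - s) p q) r := by
  obtain ⟨a, u⟩ := p
  obtain ⟨b, v⟩ := q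
  obtain ⟨c, w⟩ := r
  have h1 := binom_inversion (F := F) (fun n m => CA.mul n a (CA.mul m b c))
    (fun n m => CA.mul m (CA.mul n a b) c) (fun n m => CA.assoc n m a b c) n m
  have h2 := binom_inversion (F := F) (fun n m => B.lmul n a (B.lmul m b w))
    (fun n m => B.lmul m (CA.mul n a b) w) (fun n m => B.assoc_aau n m a b w) n m
  have h3 := binom_inversion (F := F) (fun n m => B.lmul n a (B.rmul m v c))
    (fun n m => B.rmul m (B.lmul n a v) c) (fun n m => B.assoc_aua n m a v c) n m
  have h4 := binom_inversion (F := F) (fun n m => B.rmul n u (CA.mul m b c))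
    (fun n m => B.rmul m (B.rmul n u b) c) (fun n m => B.assoc_uaa n m u b c) n m
  have h5 := hφ n m a b c
  simp only [extMul_apply]
  ext
  · simpa [Prod.fst_sum] using h1
  · simp only [Prod.snd_sum, Prod.smul_snd, map_add, LinearMap.add_apply, smul_add,
      Finset.sum_add_distrib] at h5 ⊢
    rw [h2, h3, h4, add_right_comm, add_right_comm, ← add_assoc, ← add_assoc,
      add_comm (φ.f n a (CA.mul m b c)), h5]
    abel

/-- Powers of a lift of `x`. -/
def extPow (φ : Cochain2 CA B) (X : A × M) : ℕ → A × M
  | 0 => X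
  | k + 1 => extMul φ 0 X (extPow φ X k)

theorem extMul_zero_assoc (φ : Cochain2 CA B) (hφ : IsCocycle φ) (m : ℕ) (p q r : A × M) :
    extMul φ m (extMul φ 0 p q) r = extMul φ 0 p (extMul φ m q r) := by
  rw [extMul_assoc φ hφ 0 m]
  simp

/-- If `X` is a lift of `x` with `X ∘₁ X = X`, then `X ∘ₙ X = 0` for `n ≥ 2`. -/
theorem extMul_vanish [CharZero F] (xB : ℕ → A) (hX : IsCend1x CA xB)
    (φ : Cochain2 CA B) (hφ : IsCocycle φ) (ξ : M)
    (h1 : extMul φ 1 (xB 1, ξ) (xB 1, ξ) = (xB 1, ξ)) (k : ℕ) :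
    extMul φ (k + 2) (xB 1, ξ) (xB 1, ξ) = 0 := by
  set X : A × M := (xB 1, ξ) with hXdef
  set u : ℕ → M := fun n => (extMul φ n X X).2 with hu
  have hA : ∀ k, CA.mul (k + 2) (xB 1) (xB 1) = 0 := by
    intro k
    rw [hX.2.2 1 1 (k + 2) le_rfl le_rfl, Nat.descFactorial_eq_zero_iff_lt.2 (by omega)]
    simp
  have hXX : ∀ k, extMul φ (k + 2) X X = (0, u (k + 2)) := by
    intro k
    ext
    · exact hA k
    · rfl
  have hR1 : ∀ m v, B.rmul 1 (B.rmul m v (xB 1)) (xB 1) = B.rmul m v (xB 1) := by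
    intro m v
    rw [B.assoc_uaa, Finset.sum_range_succ', Finset.sum_eq_zero]
    · have := hX.2.2 1 1 1 le_rfl le_rfl
      simp at this
      simp [this]
    · intro s _
      rw [show 1 + (s + 1) = s + 2 by omega, hA]
      simp
  have hR2 : ∀ n m v, B.rmul (n + 2) (B.rmul m v (xB 1)) (xB 1) = 0 := by
    intro n m v
    rw [B.assoc_uaa, Finset.sum_eq_zero]
    intro s _
    rw [show n + 2 + s = (n + s) + 2 by omega, hA]
    simp
  have hLR : ∀ n v, B.rmul n (B.lmul 0 (xB 1) v) (xB 1) =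
      B.lmul 0 (xB 1) (B.rmul n v (xB 1)) := by
    intro n v
    rw [B.assoc_aua]
    simp
  have key : ∀ k : ℕ, -((k : F) + 1) • u (k + 2) = B.lmul 0 (xB 1) (u (k + 3)) +
      ∑ s ∈ Finset.range (k + 1), ((k + 2).choose s : F) •
        B.rmul (1 + s) (u (k + 2 - s)) (xB 1) := by
    intro k
    have h := extMul_assoc φ hφ (k + 2) 1 X X X
    rw [h1, Finset.sum_range_succ, Finset.sum_range_succ, show k + 2 - (k + 2) = 0 by omega,
      show k + 2 - (k + 1) = 1 by omega, h1, extMul_zero_assoc φ hφ,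
      show 1 + (k + 2) = (k + 1) + 2 by omega, show 1 + (k + 1) = k + 2 by omega,
      hXX, hXX] at h
    have h' := congrArg Prod.snd h
    have hs : (∑ s ∈ Finset.range (k + 1), ((k + 2).choose s : F) •
        extMul φ (1 + s) (extMul φ (k + 2 - s) X X) X).2 =
        ∑ s ∈ Finset.range (k + 1), ((k + 2).choose s : F) •
        B.rmul (1 + s) (u (k + 2 - s)) (xB 1) := by
      rw [Prod.snd_sum]
      refine Finset.sum_congr rfl fun s hs => ?_
      have : s < k + 1 := Finset.mem_range.1 hs
      rw [show k + 2 - s = (k - s) + 2 by omega, hXX, extMul_apply]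
      simp [hXdef]
    have hc : ((k + 2).choose (k + 1) : F) = (k : F) + 2 := by
      rw [Nat.choose_succ_self_right (k + 1)]
      push_cast
      ring
    rw [Prod.snd_add, Prod.snd_add, hs, hc] at h'
    simp only [extMul_apply, hXdef, Nat.choose_self, Prod.smul_snd, Nat.cast_one, one_smul,
      map_zero, LinearMap.zero_apply, zero_add, add_zero] at h'
    generalize ∑ s ∈ Finset.range (k + 1), ((k + 2).choose s : F) •
        B.rmul (1 + s) (u (k + 2 - s)) (xB 1) = W at h' ⊢
    rw [show k + 1 + 2 = k + 3 by omega] at h'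
    have : -((k : F) + 1) • u (k + 2) = u (k + 2) - ((k : F) + 2) • u (k + 2) := by
      module
    rw [this, sub_eq_iff_eq_add]
    refine h'.trans ?_
    abel
  obtain ⟨N1, hN1⟩ := φ.loc (xB 1) (xB 1)
  obtain ⟨N2, hN2⟩ := B.loc_left (xB 1) ξ
  obtain ⟨N3, hN3⟩ := B.loc_right ξ (xB 1)
  have hN : ∀ n, N1 + N2 + N3 ≤ n → u n = 0 := by
    intro n hn
    simp only [hu, extMul_apply, hXdef]
    rw [hN1 n (by omega), hN2 n (by omega), hN3 n (by omega)]
    simp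
  have hne : ∀ k : ℕ, -((k : F) + 1) ≠ 0 := fun k => neg_ne_zero.2 (Nat.cast_add_one_ne_zero k)
  have Q : ∀ d k, N1 + N2 + N3 ≤ k + d → B.rmul 1 (u (k + 2)) (xB 1) = u (k + 2) ∧
      ∀ s, B.rmul (s + 2) (u (k + 2)) (xB 1) = 0 := by
    intro d
    induction d with
    | zero =>
      intro k hk
      rw [hN (k + 2) (by omega)]
      simp
    | succ d ih =>
      intro k hk
      obtain ⟨i1, i2⟩ := ih (k + 1) (by omega)
      rw [show k + 1 + 2 = k + 3 by omega] at i1 i2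
      constructor
      · have h := congrArg (fun v => B.rmul 1 v (xB 1)) (key k)
        simp only [map_add, map_smul, map_sum, LinearMap.add_apply, LinearMap.smul_apply,
          LinearMap.sum_apply, hLR, hR1, i1] at h
        rw [← key k] at h
        exact smul_right_injective M (hne k) h
      · intro s
        have h := congrArg (fun v => B.rmul (s + 2) v (xB 1)) (key k)
        simp only [map_add, map_smul, map_sum, LinearMap.add_apply, LinearMap.smul_apply,
          LinearMap.sum_apply, hLR, hR2, i2] at h
        simp only [map_zero, smul_zero, Finset.sum_const_zero, add_zero] at h
        exact (smul_eq_zero.1 h).resolve_left (hne k)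
  have Z : ∀ d k, N1 + N2 + N3 ≤ k + d → u (k + 2) = 0 := by
    intro d
    induction d with
    | zero => intro k hk; exact hN _ (by omega)
    | succ d ih =>
      intro k hk
      have h := key k
      rw [show k + 3 = k + 1 + 2 by omega, ih (k + 1) (by omega), Finset.sum_range_succ',
        Finset.sum_eq_zero] at h
      · simp only [map_zero, zero_add, Nat.choose_zero_right, Nat.cast_one, one_smul, add_zero,
          Nat.sub_zero, (Q _ k hk).1] at h
        have h2 : ((k : F) + 1 + 1) • u (k + 2) = 0 := by
          have : ((k : F) + 1 + 1) • u (k + 2) = u (k + 2) - (-((k : F) + 1) • u (k + 2)) := by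
            module
          rw [this, h, sub_self]
        refine (smul_eq_zero.1 h2).resolve_left ?_
        exact_mod_cast Nat.succ_ne_zero (k + 1)
      · intro s hs
        have hs' := Finset.mem_range.1 hs
        rw [show 1 + (s + 1) = s + 2 by omega,
          show k + 2 - (s + 1) = (k - (s + 1)) + 2 by omega,
          (Q (N1 + N2 + N3) _ (by omega)).2, smul_zero]
  rw [hXX, Z (N1 + N2 + N3) k (by omega)]
  rfl

theorem extMul_pow_one (φ : Cochain2 CA B) (hφ : IsCocycle φ) (X : A × M)
    (h1 : extMul φ 1 X X = X) (h2 : ∀ k, extMul φ (k + 2) X X = 0) (l : ℕ) : ∀ n,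
    extMul φ n X (extPow φ X l) = ((l + 1).descFactorial n : F) • extPow φ X (l + 1 - n) := by
  induction l with
  | zero =>
    intro n
    match n with
    | 0 => simp [extPow]
    | 1 => simpa [extPow] using h1
    | n + 2 =>
      rw [Nat.descFactorial_eq_zero_iff_lt.2 (by omega)]
      simpa [extPow] using h2 n
  | succ l ih =>
    intro n
    match n with
    | 0 => simp [extPow]
    | n + 1 =>
      have h := extMul_assoc φ hφ (n + 1) 0 X X (extPow φ X l)
      change extMul φ (n + 1) X (extPow φ X (l + 1)) = _ at h
      rw [h, Finset.sum_range_succ, Finset.sum_range_succ, Finset.sum_eq_zero]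
      · simp only [show n + 1 - (n + 1) = 0 by omega, show n + 1 - n = 1 by omega, h1,
          extMul_zero_assoc φ hφ, zero_add, Nat.choose_self, Nat.cast_one, one_smul,
          Nat.choose_succ_self_right, ih, map_smul]
        by_cases hn : n + 1 ≤ l + 1
        · have e : extMul φ 0 X (extPow φ X (l + 1 - (n + 1))) = extPow φ X (l + 1 - n) := by
            rw [show l + 1 - n = (l + 1 - (n + 1)) + 1 by omega]
            rfl
          rw [e, show l + 1 + 1 - (n + 1) = l + 1 - n by omega, smul_smul, ← add_smul]
          congr 1
          rw [Nat.succ_descFactorial_succ (l + 1) n, Nat.descFactorial_succ (l + 1) n]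
          have : l + 1 + 1 = (n + 1) + (l + 1 - n) := by omega
          rw [this]
          push_cast
          ring
        · rw [Nat.descFactorial_eq_zero_iff_lt.2 (by omega : l + 1 < n + 1),
            Nat.succ_descFactorial_succ (l + 1) n]
          rcases Nat.lt_or_ge (l + 1) n with h' | h'
          · rw [Nat.descFactorial_eq_zero_iff_lt.2 h']
            simp
          · have : n = l + 1 := by omega
            subst this
            simp [smul_smul]
      · intro s hs
        have hs' := Finset.mem_range.1 hs
        rw [show n + 1 - s = (n - 1 - s) + 2 by omega, h2]
        simp

theorem extMul_pow (φ : Cochain2 CA B) (hφ : IsCocycle φ) (X : A × M)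
    (h1 : extMul φ 1 X X = X) (h2 : ∀ k, extMul φ (k + 2) X X = 0) (k l n : ℕ) :
    extMul φ n (extPow φ X k) (extPow φ X l) =
      ((l + 1).descFactorial n : F) • extPow φ X (k + l + 1 - n) := by
  induction k with
  | zero => simpa [extPow] using extMul_pow_one φ hφ X h1 h2 l n
  | succ k ih =>
    change extMul φ n (extMul φ 0 X (extPow φ X k)) _ = _
    rw [extMul_zero_assoc φ hφ, ih, map_smul]
    by_cases hn : n ≤ l + 1
    · rw [show k + 1 + l + 1 - n = (k + l + 1 - n) + 1 by omega]
      rfl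
    · rw [Nat.descFactorial_eq_zero_iff_lt.2 (by omega)]
      simp

theorem extPow_fst (xB : ℕ → A) (hX : IsCend1x CA xB) (φ : Cochain2 CA B) (ξ : M) (k : ℕ) :
    (extPow φ (xB 1, ξ) k).1 = xB (k + 1) := by
  induction k with
  | zero => rfl
  | succ k ih =>
    change CA.mul 0 (xB 1) (extPow φ (xB 1, ξ) k).1 = _
    rw [ih, hX.2.2 1 (k + 1) 0 le_rfl (by omega), Nat.descFactorial_zero, Nat.cast_one, one_smul]
    congr 1
    omega

end Ext

/-- **Lemma 3.** Let `φ` be a 2-cocycle of `Cend_{1,x}` with values in a conformal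
bimodule `M`. If there is `ψ₁ ∈ M` with `φ₁(x, x) = x ∘₁ ψ₁ − ψ₁ + ψ₁ ∘₁ x`,
then `φ` is a 2-coboundary. -/
theorem cocycle_isCoboundary_of_exists_psi {F : Type*} [Field F] [CharZero F]
    {A : Type*} [AddCommGroup A] [Module F A]
    {M : Type*} [AddCommGroup M] [Module F M]
    (CA : ConfAlg F A) (xB : ℕ → A) (hX : IsCend1x CA xB)
    (B : ConfBimod CA M) (φ : Cochain2 CA B) (hφ : IsCocycle φ)
    (hψ : ∃ ψ₁ : M,
      φ.f 1 (xB 1) (xB 1) = B.lmul 1 (xB 1) ψ₁ - ψ₁ + B.rmul 1 ψ₁ (xB 1)) :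
    IsCoboundary φ := by
  obtain ⟨ψ, hψ⟩ := hψ
  set X : A × M := (xB 1, -ψ) with hXdef
  have h1 : extMul φ 1 X X = X := by
    have h11 : CA.mul 1 (xB 1) (xB 1) = xB 1 := by
      have := hX.2.2 1 1 1 le_rfl le_rfl
      simpa using this
    rw [extMul_apply]
    ext
    · exact h11
    · simp only [hXdef, hψ, map_neg, LinearMap.neg_apply]
      abel
  have h2 := extMul_vanish xB hX φ hφ (-ψ) h1
  have hP := extMul_pow φ hφ X h1 h2
  have hfst := extPow_fst xB hX φ (-ψ)
  let b : Module.Basis (ℕ × {k : ℕ // 1 ≤ k}) F A := Module.Basis.mk hX.1 hX.2.1.ge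
  let τ : A →ₗ[F] M := b.constr F fun p => -((B.D ^ p.1) (extPow φ X (p.2.1 - 1)).2)
  have hb : ∀ p, b p = (CA.D ^ p.1) (xB p.2.1) := fun p => Module.Basis.mk_apply _ _ p
  have hτ : ∀ i k, τ ((CA.D ^ i) (xB (k + 1))) = -((B.D ^ i) (extPow φ X k).2) := by
    intro i k
    have := b.constr_basis F (fun p => -((B.D ^ p.1) (extPow φ X (p.2.1 - 1)).2))
      (i, ⟨k + 1, by omega⟩)
    rw [hb] at this
    simpa using this
  have ind : ∀ P : A → Prop, (∀ k, P (xB (k + 1))) → (∀ a, P a → P (CA.D a)) →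
      (∀ a a', P a → P a' → P (a + a')) → (∀ (c : F) a, P a → P (c • a)) → P 0 →
      ∀ a, P a := by
    intro P hx hD hadd hsmul h0 a
    have ha : a ∈ Submodule.span F
        (Set.range fun p : ℕ × {k : ℕ // 1 ≤ k} => (CA.D ^ p.1) (xB p.2.1)) := by
      rw [hX.2.1]; trivial
    induction ha using Submodule.span_induction with
    | mem y hy =>
      obtain ⟨⟨i, k, hk⟩, rfl⟩ := hy
      obtain ⟨k, rfl⟩ := Nat.exists_eq_add_of_le' hk
      simp only
      induction i with
      | zero => simpa using hx k
      | succ i ih =>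
        rw [pow_succ', Module.End.mul_apply]
        exact hD _ ih
    | zero => exact h0
    | add y z _ _ hy hz => exact hadd _ _ hy hz
    | smul c y _ hy => exact hsmul c _ hy
  have hτD : ∀ a, τ (CA.D a) = B.D (τ a) := by
    have : τ ∘ₗ CA.D = B.D ∘ₗ τ := by
      refine b.ext ?_
      rintro ⟨i, k, hk⟩
      obtain ⟨k, rfl⟩ := Nat.exists_eq_add_of_le' hk
      have e := hτ (i + 1) k
      rw [pow_succ', Module.End.mul_apply, pow_succ', Module.End.mul_apply] at e
      rw [hb, LinearMap.comp_apply, LinearMap.comp_apply, e, hτ, map_neg]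
    exact fun a => LinearMap.congr_fun this a
  have hτx : ∀ k, τ (xB (k + 1)) = -(extPow φ X k).2 := fun k => by simpa using hτ 0 k
  refine ⟨τ, hτD, ?_⟩
  have base : ∀ k l n, φ.f n (xB (k + 1)) (xB (l + 1)) =
      B.lmul n (xB (k + 1)) (τ (xB (l + 1))) - τ (CA.mul n (xB (k + 1)) (xB (l + 1))) +
        B.rmul n (τ (xB (k + 1))) (xB (l + 1)) := by
    intro k l n
    have h := congrArg Prod.snd (hP k l n)
    simp only [extMul_apply, hXdef, hfst, Prod.smul_snd] at h
    have hm : τ (CA.mul n (xB (k + 1)) (xB (l + 1))) =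
        -(((l + 1).descFactorial n : F) • (extPow φ X (k + l + 1 - n)).2) := by
      rw [hX.2.2 _ _ _ (by omega) (by omega), map_smul]
      by_cases hn : n ≤ l + 1
      · rw [show k + 1 + (l + 1) - n = (k + l + 1 - n) + 1 by omega, hτx, smul_neg]
      · rw [Nat.descFactorial_eq_zero_iff_lt.2 (by omega)]
        simp
    rw [hm, hτx, hτx, hXdef, ← h]
    simp only [map_neg, LinearMap.neg_apply]
    abel
  have step : ∀ k b n, φ.f n (xB (k + 1)) b =
      B.lmul n (xB (k + 1)) (τ b) - τ (CA.mul n (xB (k + 1)) b) +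
        B.rmul n (τ (xB (k + 1))) b := by
    intro k
    refine ind _ (base k) ?_ ?_ ?_ ?_
    · intro b hb n
      rw [φ.D_right, hτD, B.D_lu, CA.D_right, B.D_ra, hb n, hb (n - 1)]
      simp only [map_add, map_sub, map_smul, hτD]
      module
    · intro b b' hb hb' n
      simp only [map_add, hb n, hb' n]
      abel
    · intro c b hb n
      simp only [map_smul, hb n]
      module
    · intro n
      simp
  intro n a b
  revert a b n
  have full : ∀ a n b, φ.f n a b =
      B.lmul n a (τ b) - τ (CA.mul n a b) + B.rmul n (τ a) b := by
    refine ind _ (fun k n b => step k b n) ?_ ?_ ?_ ?_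
    · intro a ha n b
      rw [φ.D_left, hτD, B.D_la, CA.D_left, B.D_ru, ha (n - 1)]
      simp only [map_neg, map_smul]
      module
    · intro a a' ha ha' n b
      simp only [map_add, LinearMap.add_apply, ha n, ha' n]
      abel
    · intro c a ha n b
      simp only [map_smul, LinearMap.smul_apply, ha n]
      module
    · intro n b
      simp
  exact fun n a b => full a n b
end

section
/- Let φ be a 2-cocycle of Cend_{1,x} with values in a conformal bimodule M. Write φ_m = φ_m(x, x) ∈ M, and let L_m, R_m : M → M denote the operators L_m(u) = x ∘_m u and R_m(u) = u ∘_m x. Then for every m ≥ 1: L₀^m φ_{m+1} = (L₁ − m)(L₁ − (m−1))⋯(L₁ − 2) L₁ φ₁ − Σ_{s=1}^{m} (L₁ − m)⋯(L₁ − (s+1)) L₀^{s−1} R_s φ₁, where a product of the form (L₁ − m)⋯(L₁ − (s+1)) is interpreted as the identity operator when s = m (and the product (L₁ − m)⋯(L₁ − 2) is the identity when m = 1). -/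
open Finset

theorem abstract_formula {F : Type*} [Field F] {M : Type*} [AddCommGroup M] [Module F M]
    (L0 L1 : Module.End F M) (R : ℕ → Module.End F M) (p : ℕ → M)
    (hc : L0 * L1 = L1 * L0 - L0)
    (h1 : L0 (p 2) = L1 (p 1) - R 1 (p 1))
    (h2 : ∀ m, 2 ≤ m → L0 (p (m + 1)) = L1 (p m) - p m - R m (p 1))
    (m : ℕ) (hm : 1 ≤ m) :
    (L0 ^ m) (p (m + 1)) =
      (Polynomial.aeval L1
          (∏ j ∈ Finset.Icc 2 m, (Polynomial.X - Polynomial.C (j : F))) * L1) (p 1) -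
      ∑ s ∈ Finset.Icc 1 m,
        (Polynomial.aeval L1
            (∏ j ∈ Finset.Icc (s + 1) m, (Polynomial.X - Polynomial.C (j : F))) *
          L0 ^ (s - 1) * R s) (p 1) := by
  have hpow : ∀ k : ℕ, ∀ u : M, (L0 ^ k) (L1 u) = L1 ((L0 ^ k) u) - (k : F) • (L0 ^ k) u := by
    intro k
    induction k with
    | zero => intro u; simp
    | succ k ih =>
      intro u
      have hcu : L0 (L1 u) = L1 (L0 u) - L0 u := LinearMap.congr_fun hc u
      simp only [pow_succ, Module.End.mul_apply, hcu, map_sub, ih]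
      push_cast
      module
  induction m, hm using Nat.le_induction with
  | base => simp [h1]
  | succ m hm ih =>
    have key : (L0 ^ (m + 1)) (p (m + 1 + 1)) =
        (L1 - algebraMap F (Module.End F M) ((m + 1 : ℕ) : F)) ((L0 ^ m) (p (m + 1)))
          - (L0 ^ m) (R (m + 1) (p 1)) := by
      rw [pow_succ, Module.End.mul_apply, h2 (m + 1) (by omega), map_sub, map_sub, hpow]
      simp only [LinearMap.sub_apply, Module.algebraMap_end_apply]
      push_cast
      module
    have hprod : ∀ s, s ≤ m → Polynomial.aeval L1
        (∏ j ∈ Finset.Icc (s + 1) (m + 1), (Polynomial.X - Polynomial.C (j : F))) =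
        (L1 - algebraMap F (Module.End F M) ((m + 1 : ℕ) : F)) * Polynomial.aeval L1
        (∏ j ∈ Finset.Icc (s + 1) m, (Polynomial.X - Polynomial.C (j : F))) := by
      intro s hs
      rw [Finset.prod_Icc_succ_top (by omega), mul_comm, map_mul, map_sub,
        Polynomial.aeval_X, Polynomial.aeval_C]
    rw [key, ih, Finset.sum_Icc_succ_top (by omega), hprod 1 hm, map_sub, map_sum]
    have hs : ∀ s ∈ Finset.Icc 1 m, (Polynomial.aeval L1
            (∏ j ∈ Finset.Icc (s + 1) (m + 1), (Polynomial.X - Polynomial.C (j : F))) *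
          L0 ^ (s - 1) * R s) (p 1) =
        (L1 - algebraMap F (Module.End F M) ((m + 1 : ℕ) : F)) ((Polynomial.aeval L1
            (∏ j ∈ Finset.Icc (s + 1) m, (Polynomial.X - Polynomial.C (j : F))) *
          L0 ^ (s - 1) * R s) (p 1)) := by
      intro s hs
      rw [hprod s (Finset.mem_Icc.mp hs).2]
      simp only [mul_assoc, Module.End.mul_apply]
    rw [Finset.sum_congr rfl hs]
    have he : Finset.Icc (m + 1 + 1) (m + 1) = ∅ := Finset.Icc_eq_empty (by omega)
    rw [he, Finset.prod_empty, map_one, one_mul, Nat.add_sub_cancel]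
    simp only [mul_assoc, Module.End.mul_apply]
    abel

/-- **Lemma 4.** Let `φ` be a 2-cocycle of `Cend_{1,x}` with values in a conformal
bimodule `M`, `φ_m = φ_m(x,x)`, `L_m u = x ∘ₘ u`, `R_m u = u ∘ₘ x`. Then for all `m ≥ 1`:
`L₀^m φ_{m+1} = (L₁−m)⋯(L₁−2)·L₁ φ₁ − Σ_{s=1}^m (L₁−m)⋯(L₁−(s+1))·L₀^{s−1} R_s φ₁`,
where the products of the commuting operators `(L₁ − j)` are expressed by
evaluating the polynomials `∏ⱼ (X − j)` at `L₁` (empty products are the identity). -/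
theorem L0_pow_phi_formula {F : Type*} [Field F] [CharZero F]
    {A : Type*} [AddCommGroup A] [Module F A]
    {M : Type*} [AddCommGroup M] [Module F M]
    (CA : ConfAlg F A) (xB : ℕ → A) (hX : IsCend1x CA xB)
    (B : ConfBimod CA M) (φ : Cochain2 CA B) (hφ : IsCocycle φ)
    (m : ℕ) (hm : 1 ≤ m) :
    ((B.lmul 0 (xB 1) : Module.End F M) ^ m) (φ.f (m + 1) (xB 1) (xB 1)) =
      (Polynomial.aeval (B.lmul 1 (xB 1) : Module.End F M)
          (∏ j ∈ Finset.Icc 2 m, (Polynomial.X - Polynomial.C (j : F))) *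
        B.lmul 1 (xB 1)) (φ.f 1 (xB 1) (xB 1)) -
      ∑ s ∈ Finset.Icc 1 m,
        (Polynomial.aeval (B.lmul 1 (xB 1) : Module.End F M)
            (∏ j ∈ Finset.Icc (s + 1) m, (Polynomial.X - Polynomial.C (j : F))) *
          (B.lmul 0 (xB 1) : Module.End F M) ^ (s - 1) *
          (B.rmul s).flip (xB 1)) (φ.f 1 (xB 1) (xB 1)) := by
  have hmul : ∀ n, CA.mul n (xB 1) (xB 1) = ((1 : ℕ).descFactorial n : F) • xB (1 + 1 - n) :=
    fun n => hX.2.2 1 1 n le_rfl le_rfl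
  have hm1 : CA.mul 1 (xB 1) (xB 1) = xB 1 := by simp [hmul]
  have hm2 : ∀ n, 2 ≤ n → CA.mul n (xB 1) (xB 1) = 0 := by
    intro n hn
    rw [hmul, Nat.descFactorial_of_lt (by omega)]
    simp
  have c0 : ∀ k, 2 ≤ k → B.lmul 0 (xB 1) (φ.f k (xB 1) (xB 1)) =
      φ.f k (CA.mul 0 (xB 1) (xB 1)) (xB 1) + B.rmul k (φ.f 0 (xB 1) (xB 1)) (xB 1) := by
    intro k hk
    have := hφ 0 k (xB 1) (xB 1) (xB 1)
    simpa [hm2 k hk] using this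
  have c1 : ∀ k, 1 ≤ k → B.lmul 1 (xB 1) (φ.f k (xB 1) (xB 1)) +
      φ.f 1 (xB 1) (CA.mul k (xB 1) (xB 1)) =
      φ.f k (xB 1) (xB 1) + B.rmul k (φ.f 1 (xB 1) (xB 1)) (xB 1) +
        B.lmul 0 (xB 1) (φ.f (k + 1) (xB 1) (xB 1)) := by
    intro k hk
    have := hφ 1 k (xB 1) (xB 1) (xB 1)
    rw [c0 (k + 1) (by omega), this]
    simp [Finset.sum_range_succ, hm1]
  refine abstract_formula (B.lmul 0 (xB 1)) (B.lmul 1 (xB 1)) (fun s => (B.rmul s).flip (xB 1))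
    (fun k => φ.f k (xB 1) (xB 1)) ?_ ?_ ?_ m hm
  · ext u
    have := B.assoc_aau 1 0 (xB 1) (xB 1) u
    rw [hm1] at this
    simp [Finset.sum_range_succ] at this
    simp only [Module.End.mul_apply, LinearMap.sub_apply]
    rw [eq_sub_iff_add_eq]
    exact (congrArg (fun v => B.lmul 0 (xB 1) (B.lmul 1 (xB 1) u) + v) this).trans (by abel)
  · have := c1 1 le_rfl
    rw [hm1] at this
    simp only [LinearMap.flip_apply]
    rw [add_comm, add_assoc] at this
    rw [add_left_cancel this]
    simp
  · intro k hk
    have := c1 k (by omega)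
    rw [hm2 k hk, map_zero, add_zero] at this
    simp only [LinearMap.flip_apply]
    rw [this]
    abel
end

section
/- Suppose the endomorphisms Lₙ satisfy L₁Lₘ = L₀L_{m+1} + Lₘ for all m ∈ ℤ₊. Then for every k ≥ 1 the identity L₀^{k−1}L_k = L₁(L₁ − 1)(L₁ − 2)⋯(L₁ − (k−1)) holds in End(M), where L₁ − j denotes L₁ − j·id. -/
/-- Suppose the endomorphisms `Lₙ` of an `F`-vector space `M` (`char F = 0`) satisfy
`L₁Lₘ = L₀L_{m+1} + Lₘ` for all `m ∈ ℤ₊`. Then for every `k ≥ 1`,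
`L₀^{k−1} L_k = L₁(L₁ − 1)⋯(L₁ − (k−1))`, where `L₁ − j` means `L₁ − j·id` and
the product of the commuting factors is expressed by evaluating the polynomial
`∏_{j=0}^{k-1} (X − j)` at `L₁`. -/
theorem L0_pow_mul_L_eq_prod {F : Type*} [Field F] [CharZero F]
    {M : Type*} [AddCommGroup M] [Module F M]
    (L : ℕ → Module.End F M)
    (hL : ∀ m : ℕ, L 1 * L m = L 0 * L (m + 1) + L m) :
    ∀ k : ℕ, 1 ≤ k →
      L 0 ^ (k - 1) * L k =
        Polynomial.aeval (L 1) (∏ j ∈ Finset.range k, (Polynomial.X - Polynomial.C (j : F))) := by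
  have hc : ∀ n : ℕ, L 0 ^ n * L 1 = (L 1 - (n : Module.End F M)) * L 0 ^ n := by
    intro n
    induction n with
    | zero => simp
    | succ n ih =>
      have h0 : L 0 * L 1 = L 1 * L 0 - L 0 := by
        rw [hL 0]; simp
      rw [pow_succ, mul_assoc, h0, mul_sub, ← mul_assoc, ih]
      push_cast
      noncomm_ring
  intro k hk
  induction k, hk using Nat.le_induction with
  | base => simp
  | succ k hk ih =>
    obtain ⟨n, rfl⟩ : ∃ n, k = n + 1 := ⟨k - 1, by omega⟩
    simp only [Nat.add_sub_cancel] at ih ⊢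
    rw [Finset.prod_range_succ, mul_comm, map_mul, ← ih]
    have h1 : L 0 * L (n + 1 + 1) = L 1 * L (n + 1) - L (n + 1) := by
      rw [hL (n + 1)]; simp
    rw [pow_succ, mul_assoc, h1, mul_sub, ← mul_assoc, hc n]
    simp only [map_sub, Polynomial.aeval_X, map_natCast]
    push_cast
    noncomm_ring
end

section
/- Suppose the endomorphisms Lₙ satisfy L₁Lₘ = L₀L_{m+1} + Lₘ for all m ∈ ℤ₊, and that for every v ∈ M there exists N with L_k v = 0 for all k ≥ N. Let V ⊆ M be a finite-dimensional subspace with L₁V ⊆ V. Then V decomposes as a direct sum of L₁-invariant subspaces V = V₀ ⊕ V₁ ⊕ ⋯ ⊕ V_k, where L₁v = i·v for all v ∈ V_i; equivalently, the restriction of L₁ to V is diagonalizable and all of its eigenvalues are nonnegative integers. -/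
/-- `(L₁ - n) ⋯ (L₁ - 1) L₁`, defined recursively. -/
def fallingOp {F M : Type*} [Field F] [AddCommGroup M] [Module F M]
    (A : Module.End F M) : ℕ → Module.End F M
  | 0 => 1
  | n + 1 => fallingOp A n * (A - (n : F) • 1)

theorem fallingOp_comm {F M : Type*} [Field F] [AddCommGroup M] [Module F M]
    (A : Module.End F M) (n : ℕ) : Commute A (fallingOp A n) := by
  induction n with
  | zero => exact Commute.one_right _
  | succ n ih =>
    exact ih.mul_right ((Commute.refl A).sub_right ((Commute.one_right A).smul_right _))

theorem L1_pow {F M : Type*} [Field F] [AddCommGroup M] [Module F M]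
    (L : ℕ → Module.End F M)
    (hL : ∀ m : ℕ, L 1 * L m = L 0 * L (m + 1) + L m) (n : ℕ) :
    L 1 * L 0 ^ n = L 0 ^ n * L 1 + (n : F) • L 0 ^ n := by
  induction n with
  | zero => simp
  | succ n ih =>
    have h0 := hL 0
    rw [pow_succ, ← mul_assoc, ih, add_mul, mul_assoc, h0, mul_add, ← mul_assoc]
    push_cast
    rw [add_smul, one_smul, smul_mul_assoc]
    abel

theorem fallingOp_eq {F M : Type*} [Field F] [AddCommGroup M] [Module F M]
    (L : ℕ → Module.End F M)
    (hL : ∀ m : ℕ, L 1 * L m = L 0 * L (m + 1) + L m) (n : ℕ) :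
    fallingOp (L 1) (n + 1) = L 0 ^ n * L (n + 1) := by
  induction n with
  | zero => simp [fallingOp]
  | succ n ih =>
    rw [fallingOp, mul_sub, ← (fallingOp_comm (L 1) (n + 1)).eq, ih, ← mul_assoc, L1_pow L hL,
      add_mul, mul_assoc, hL (n + 1), mul_add, ← mul_assoc, ← pow_succ]
    push_cast
    rw [mul_smul_comm, mul_one, add_smul, one_smul, smul_mul_assoc]
    abel

theorem mem_of_fallingOp {F M : Type*} [Field F] [CharZero F] [AddCommGroup M] [Module F M]
    (A : Module.End F M) (V : Submodule F M) (hV : ∀ v ∈ V, A v ∈ V) (n : ℕ) :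
    ∀ v ∈ V, fallingOp A n v = 0 →
      v ∈ ⨆ i ∈ Finset.range n, V ⊓ Module.End.eigenspace A (i : F) := by
  induction n with
  | zero =>
    intro v _ h
    have : v = 0 := by simpa [fallingOp] using h
    rw [this]
    exact zero_mem _
  | succ n ih =>
    intro v hv h
    have hw := ih ((A - (n : F) • 1) v)
      (by simpa using V.sub_mem (hV v hv) (V.smul_mem (n : F) hv)) h
    have hle : (⨆ i ∈ Finset.range n, V ⊓ Module.End.eigenspace A (i : F)) ≤
        Submodule.map (A - (n : F) • 1)
          (⨆ i ∈ Finset.range n, V ⊓ Module.End.eigenspace A (i : F)) := by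
      refine iSup₂_le fun i hi w hw => ?_
      have hne : (i : F) - n ≠ 0 := by
        rw [sub_ne_zero]
        exact_mod_cast (Finset.mem_range.mp hi).ne
      refine ⟨((i : F) - n)⁻¹ • w, Submodule.smul_mem _ _
        ((le_iSup₂_of_le (f := fun i (_ : i ∈ Finset.range n) =>
          V ⊓ Module.End.eigenspace A (i : F)) i hi le_rfl) hw), ?_⟩
      have he : A w = (i : F) • w := Module.End.mem_eigenspace_iff.mp hw.2
      have h2 : (A - (n : F) • 1) w = ((i : F) - n) • w := by
        simp [he, sub_smul]
      rw [map_smul, h2, smul_smul, inv_mul_cancel₀ hne, one_smul]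
    obtain ⟨u, hu, huv⟩ := hle hw
    have huV : u ∈ V := (iSup₂_le fun i _ => inf_le_left :
      (⨆ i ∈ Finset.range n, V ⊓ Module.End.eigenspace A (i : F)) ≤ V) hu
    have hmono : (⨆ i ∈ Finset.range n, V ⊓ Module.End.eigenspace A (i : F)) ≤
        ⨆ i ∈ Finset.range (n + 1), V ⊓ Module.End.eigenspace A (i : F) :=
      biSup_mono fun i hi => Finset.range_mono (Nat.le_succ n) hi
    have hd : v - u ∈ V ⊓ Module.End.eigenspace A (n : F) := by
      refine ⟨V.sub_mem hv huV, Module.End.mem_eigenspace_iff.mpr ?_⟩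
      have h3 : (A - (n : F) • 1) (v - u) = 0 := by rw [map_sub, huv, sub_self]
      simpa [-map_sub, sub_eq_zero] using h3
    have := Submodule.add_mem _ (hmono hu)
      ((le_iSup₂_of_le (f := fun i (_ : i ∈ Finset.range (n + 1)) =>
          V ⊓ Module.End.eigenspace A (i : F)) n (Finset.self_mem_range_succ n) le_rfl) hd)
    simpa using this

/-- **Lemma 5.** Let `M` be a vector space over a field `F` of characteristic zero
and `(Lₙ)` endomorphisms of `M` with `L₁Lₘ = L₀L_{m+1} + Lₘ` for all `m`, and such
that for every `v ∈ M` one has `L_k v = 0` for all sufficiently large `k`.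
If `V ⊆ M` is a finite-dimensional `L₁`-invariant subspace, then
`V = V₀ ⊕ V₁ ⊕ ⋯ ⊕ V_k` where `Vᵢ = {v ∈ V : L₁ v = i·v}`: the subspaces
`V ⊓ eigenspace(L₁, i)`, `i ∈ ℤ₊`, are independent and their span is `V`. -/
theorem L1_diagonalizable_on_invariant_subspace {F : Type*} [Field F] [CharZero F]
    {M : Type*} [AddCommGroup M] [Module F M]
    (L : ℕ → Module.End F M)
    (hL : ∀ m : ℕ, L 1 * L m = L 0 * L (m + 1) + L m)
    (hloc : ∀ v : M, ∃ N : ℕ, ∀ k, N ≤ k → L k v = 0)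
    (V : Submodule F M) (hVfin : FiniteDimensional F V)
    (hVinv : ∀ v ∈ V, L 1 v ∈ V) :
    iSupIndep (fun i : ℕ => V ⊓ Module.End.eigenspace (L 1) (i : F)) ∧
    ∃ k : ℕ, V = ⨆ i ∈ Finset.range (k + 1), V ⊓ Module.End.eigenspace (L 1) (i : F) := by
  refine ⟨?_, ?_⟩
  · exact ((Module.End.eigenspaces_iSupIndep (L 1)).comp
      (f := fun i : ℕ => (i : F)) Nat.cast_injective).mono fun i => inf_le_right
  · obtain ⟨s, hs⟩ := (Module.Finite.iff_fg.mp hVfin : V.FG)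
    choose N hN using hloc
    refine ⟨s.sup N, le_antisymm ?_ (iSup₂_le fun i _ => inf_le_left)⟩
    conv_lhs => rw [← hs]
    refine Submodule.span_le.mpr fun v hv => ?_
    refine mem_of_fallingOp (L 1) V hVinv _ v (hs ▸ Submodule.subset_span hv) ?_
    rw [fallingOp_eq L hL, Module.End.mul_apply,
      hN v _ ((Finset.le_sup (f := N) hv).trans (Nat.le_succ _)), map_zero]
end

section
/- Let (Rₙ)_{n ∈ ℤ₊} be a further sequence of 𝔽-linear endomorphisms of M, and suppose: (i) LₙLₘ = L₀L_{n+m} + n L_{n+m−1} for all n, m ∈ ℤ₊; (ii) R₁Rₘ = Rₘ and RₙRₘ = 0 for all n ≥ 2, m ∈ ℤ₊; (iii) RₙLₘ = Σ_{s=0}^{m} (−1)^s binom(m,s) L_{m−s}R_{n+s} for all n, m ∈ ℤ₊; (iv) for every v ∈ M there exists N with L_k v = 0 and R_k v = 0 for all k ≥ N. Let A be the (not necessarily unital) subalgebra of End(M) generated by L₁ and by the operators L₀^m R_{m+1} for all m ∈ ℤ₊. Then for every u ∈ M the subspace A·u = {a(u) : a ∈ A} of M is finite-dimensional. -/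
/-- **Lemma 6.** Let `M` be a vector space over a field `F` of characteristic zero,
and `(Lₙ)`, `(Rₙ)` endomorphisms of `M` satisfying the relations (5)–(7) and the
locality condition. Let `A` be the non-unital subalgebra of `End(M)` generated by
`L₁` and by `L₀^m R_{m+1}`, `m ∈ ℤ₊`. Then for every `u ∈ M` the subspace
`A·u = {a(u) : a ∈ A}` is finite-dimensional. -/
theorem orbit_finiteDimensional {F : Type*} [Field F] [CharZero F]
    {M : Type*} [AddCommGroup M] [Module F M]
    (L R : ℕ → Module.End F M)
    (h1 : ∀ n m : ℕ, L n * L m = L 0 * L (n + m) + (n : F) • L (n + m - 1))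
    (h2a : ∀ m : ℕ, R 1 * R m = R m)
    (h2b : ∀ n m : ℕ, 2 ≤ n → R n * R m = 0)
    (h3 : ∀ n m : ℕ, R n * L m =
      ∑ s ∈ Finset.range (m + 1),
        ((-1 : F) ^ s * (m.choose s : F)) • (L (m - s) * R (n + s)))
    (hloc : ∀ v : M, ∃ N : ℕ, ∀ k, N ≤ k → L k v = 0 ∧ R k v = 0)
    (u : M) :
    FiniteDimensional F
      (Submodule.span F ((fun a : Module.End F M => a u) ''
        (NonUnitalAlgebra.adjoin F
          ({L 1} ∪ Set.range fun m : ℕ => L 0 ^ m * R (m + 1)) : Set (Module.End F M)))) := by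
  classical
  -- commutation of `L 1` with powers of `L 0`
  have h10 : L 1 * L 0 = L 0 * L 1 + L 0 := by simpa using h1 1 0
  have hcomm : ∀ m : ℕ, L 1 * L 0 ^ m = L 0 ^ m * L 1 + (m : F) • L 0 ^ m := by
    intro m
    induction m with
    | zero => simp
    | succ m ih =>
      rw [pow_succ, ← mul_assoc, ih, add_mul, mul_assoc, h10, smul_mul_assoc, mul_add]
      push_cast
      rw [add_smul, one_smul, mul_assoc]
      abel
  have hR0 : ∀ n : ℕ, Commute (R n) (L 0) := by
    intro n
    have := h3 n 0
    exact (show R n * L 0 = L 0 * R n by simpa using this)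
  have hR1 : ∀ n : ℕ, R n * L 1 = L 1 * R n - L 0 * R (n + 1) := by
    intro n
    have := h3 n 1
    simp only [Finset.sum_range_succ, Finset.sum_range_zero] at this
    simpa [sub_eq_add_neg] using this
  obtain ⟨T, hT⟩ : ∃ T : ℕ → Module.End F M, T = fun m : ℕ => L 0 ^ m * R (m + 1) := ⟨_, rfl⟩
  have hTm : ∀ m, T m = L 0 ^ m * R (m + 1) := fun m => by rw [hT]
  rw [← hT]
  have hTL : ∀ m, T m * L 1 = L 1 * T m - (m : F) • T m - T (m + 1) := by
    intro m
    rw [hTm, hTm, mul_assoc, hR1, mul_sub, ← mul_assoc (L 1), hcomm, add_mul, smul_mul_assoc,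
      ← mul_assoc (L 0 ^ m) (L 0), ← pow_succ, mul_assoc]
    abel
  have hTT : ∀ m k, T m * T k = 0 ∨ T m * T k = T k := by
    intro m k
    have e : T m * T k = L 0 ^ m * (L 0 ^ k * (R (m + 1) * R (k + 1))) := by
      rw [hTm, hTm, mul_assoc, ← mul_assoc (R (m + 1)), ((hR0 (m + 1)).pow_right k).eq, mul_assoc]
    rcases Nat.eq_zero_or_pos m with rfl | hm
    · right
      rw [e, hTm, zero_add, h2a, pow_zero, one_mul]
    · left
      rw [e, h2b _ _ (by omega), mul_zero, mul_zero]
  -- orbits of `L 1`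
  let W : M → Submodule F M := fun w => Submodule.span F (Set.range fun k : ℕ => (L 1 ^ k) w)
  have hWself : ∀ w, w ∈ W w := fun w => Submodule.subset_span ⟨0, by simp⟩
  have hWle : ∀ w (X : Submodule F M), w ∈ X → (∀ x ∈ X, L 1 x ∈ X) → W w ≤ X := by
    intro w X hw hX
    refine Submodule.span_le.2 ?_
    rintro _ ⟨k, rfl⟩
    induction k with
    | zero => simpa using hw
    | succ k ih =>
      have := hX _ ih
      simpa [pow_succ'] using this
  have hWst : ∀ w, ∀ x ∈ W w, L 1 x ∈ W w := by
    intro w x hx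
    have : W w ≤ (W w).comap (L 1) := by
      refine Submodule.span_le.2 ?_
      rintro _ ⟨k, rfl⟩
      exact Submodule.subset_span ⟨k + 1, by simp [pow_succ']⟩
    exact this hx
  have hWfd : ∀ w, FiniteDimensional F (W w) := by
    intro w
    obtain ⟨N, hN⟩ := hloc w
    let V : Submodule F M := Submodule.span F
      (insert w (Set.range fun j : Fin N => (L 0 ^ (j : ℕ) * L (j + 1)) w))
    have hV : FiniteDimensional F V :=
      FiniteDimensional.span_of_finite F ((Set.finite_range _).insert w)
    have hE : ∀ j : ℕ, (L 0 ^ j * L (j + 1)) w ∈ V := by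
      intro j
      by_cases hj : j < N
      · exact Submodule.subset_span (Or.inr ⟨⟨j, hj⟩, rfl⟩)
      · have : L (j + 1) w = 0 := (hN (j + 1) (by omega)).1
        simp [this]
    have hLE : ∀ j : ℕ, L 1 * (L 0 ^ j * L (j + 1)) =
        L 0 ^ (j + 1) * L (j + 1 + 1) + ((j : F) + 1) • (L 0 ^ j * L (j + 1)) := by
      intro j
      have := h1 1 (j + 1)
      rw [show 1 + (j + 1) - 1 = j + 1 by omega, show 1 + (j + 1) = j + 1 + 1 by omega,
        Nat.cast_one, one_smul] at this
      rw [← mul_assoc, hcomm, add_mul, mul_assoc, this, mul_add, ← mul_assoc, ← pow_succ,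
        smul_mul_assoc, add_smul, one_smul]
      abel
    have hst : V ≤ V.comap (L 1) := by
      refine Submodule.span_le.2 ?_
      rintro _ (rfl | ⟨j, rfl⟩)
      · simpa using hE 0
      · have e := congrArg (fun f : Module.End F M => f w) (hLE j)
        have : L 1 ((L 0 ^ (j : ℕ) * L (j + 1)) w) ∈ V := by
          refine e ▸ ?_
          exact V.add_mem (hE (j + 1)) (V.smul_mem _ (hE j))
        exact this
    exact Submodule.finiteDimensional_of_le
      (hWle w V (Submodule.subset_span (Or.inl rfl)) (fun x hx => hst hx))
  obtain ⟨N, hN⟩ := hloc u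
  let X : Submodule F M := ⨆ m : Fin N, W (T m u)
  have hXfd : FiniteDimensional F X := Submodule.finiteDimensional_iSup _
  have hXst : ∀ x ∈ X, L 1 x ∈ X := by
    have : X ≤ X.comap (L 1) :=
      iSup_le fun m x hx => Submodule.mem_iSup_of_mem m (hWst _ x hx)
    exact fun x hx => this hx
  have hTu : ∀ m, T m u ∈ X := by
    intro m
    by_cases hm : m < N
    · exact Submodule.mem_iSup_of_mem (⟨m, hm⟩ : Fin N) (hWself _)
    · have : R (m + 1) u = 0 := (hN (m + 1) (by omega)).2
      simp [hTm, this]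
  have hTW : ∀ w, (∀ m, T m w ∈ X) → ∀ x ∈ W w, ∀ m, T m x ∈ X := by
    intro w hw
    have key : ∀ k m, T m ((L 1 ^ k) w) ∈ X := by
      intro k
      induction k with
      | zero => simpa using hw
      | succ k ih =>
        intro m
        have e := congrArg (fun f : Module.End F M => f ((L 1 ^ k) w)) (hTL m)
        simp only [Module.End.mul_apply, LinearMap.sub_apply, LinearMap.smul_apply] at e
        rw [pow_succ', Module.End.mul_apply, e]
        exact X.sub_mem (X.sub_mem (hXst _ (ih m)) (X.smul_mem _ (ih m))) (ih (m + 1))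
    intro x hx m
    have : W w ≤ X.comap (T m) := by
      refine Submodule.span_le.2 ?_
      rintro _ ⟨k, rfl⟩
      exact key k m
    exact this hx
  have hTX : ∀ x ∈ X, ∀ m, T m x ∈ X := by
    intro x hx m
    have : X ≤ X.comap (T m) := by
      refine iSup_le fun l y hy => ?_
      refine hTW (T l u) (fun m => ?_) y hy m
      rw [← Module.End.mul_apply]
      rcases hTT m l with h | h <;> rw [h]
      · simp
      · exact hTu l
    exact this hx
  let V : Submodule F M := W u ⊔ X
  have hWufd := hWfd u
  have hVfd : FiniteDimensional F V := Submodule.finiteDimensional_sup _ _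
  have huV : u ∈ V := Submodule.mem_sup_left (hWself u)
  have hA : ∀ a ∈ NonUnitalAlgebra.adjoin F ({L 1} ∪ Set.range T), ∀ x ∈ V, a x ∈ V := by
    intro a ha
    induction ha using NonUnitalAlgebra.adjoin_induction with
    | mem a ha =>
      have : V ≤ V.comap a := by
        rcases ha with rfl | ⟨m, rfl⟩
        · exact sup_le (fun x hx => Submodule.mem_sup_left (hWst u x hx))
            (fun x hx => Submodule.mem_sup_right (hXst x hx))
        · exact sup_le (fun x hx => Submodule.mem_sup_right (hTW u hTu x hx m))
            (fun x hx => Submodule.mem_sup_right (hTX x hx m))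
      exact fun x hx => this hx
    | add a b _ _ iha ihb => exact fun x hx => V.add_mem (iha x hx) (ihb x hx)
    | zero => exact fun x _ => V.zero_mem
    | mul a b _ _ iha ihb => exact fun x hx => iha _ (ihb x hx)
    | smul r a _ iha => exact fun x hx => V.smul_mem r (iha x hx)
  refine Submodule.finiteDimensional_of_le (S₂ := V) (Submodule.span_le.2 ?_)
  rintro _ ⟨a, ha, rfl⟩
  exact hA a ha u huV
end

section
/- Suppose the endomorphisms Lₙ satisfy LₙLₘ = L₀L_{n+m} + n L_{n+m−1} for all n, m ∈ ℤ₊. Let N > 1 be an integer and let χ ∈ M satisfy L₀χ = 0 and L₁χ = (N−1)χ. Then χ = 0. -/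
/-- Let `M` be a vector space over a field `F` of characteristic zero and `(Lₙ)`
endomorphisms of `M` with `LₙLₘ = L₀L_{n+m} + n·L_{n+m−1}`. If `N > 1` is an
integer and `χ ∈ M` satisfies `L₀χ = 0` and `L₁χ = (N−1)χ`, then `χ = 0`. -/
theorem chi_eq_zero {F : Type*} [Field F] [CharZero F]
    {M : Type*} [AddCommGroup M] [Module F M]
    (L : ℕ → Module.End F M)
    (hL : ∀ n m : ℕ, L n * L m = L 0 * L (n + m) + (n : F) • L (n + m - 1))
    (N : ℕ) (hN : 1 < N) (χ : M)
    (h0 : L 0 χ = 0) (h1 : L 1 χ = ((N : F) - 1) • χ) :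
    χ = 0 := by
  have e1 := congrArg (fun f : Module.End F M => f χ) (hL 1 1)
  have e2 := congrArg (fun f : Module.End F M => f χ) (hL 2 0)
  simp only [Module.End.mul_apply, LinearMap.add_apply, LinearMap.smul_apply, h0, h1, map_zero,
    map_smul, Nat.reduceAdd, Nat.reduceSub, Nat.cast_one, Nat.cast_ofNat, one_smul] at e1 e2
  have e3 : ((N : F) * ((N : F) - 1)) • χ = 0 := by
    linear_combination (norm := module) e1 - e2
  have hN0 : (N : F) ≠ 0 := by
    exact_mod_cast (by omega : N ≠ 0)
  have hN1 : (N : F) - 1 ≠ 0 := by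
    rw [sub_ne_zero]
    exact_mod_cast (by omega : N ≠ 1)
  exact (smul_eq_zero.mp e3).resolve_left (mul_ne_zero hN0 hN1)
end

section
/- Let φ be a 2-cocycle of Cend_{1,x} with values in a conformal bimodule M, and write φ_m = φ_m(x, x) ∈ M. Then x ∘₀ φ₂ = x ∘₁ φ₁ − φ₁ ∘₁ x, and for every m > 1, x ∘₀ φ_{m+1} = x ∘₁ φ_m − φ_m − φ₁ ∘_m x. -/
open Finset

/-- Relations (8)–(9): for a 2-cocycle `φ` of `Cend_{1,x}` with values in a conformal
bimodule `M`, writing `φ_m = φ_m(x,x)`, one has `x ∘₀ φ₂ = x ∘₁ φ₁ − φ₁ ∘₁ x`, and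
`x ∘₀ φ_{m+1} = x ∘₁ φ_m − φ_m − φ₁ ∘ₘ x` for every `m > 1`. -/
theorem cocycle_relations {F : Type*} [Field F] [CharZero F]
    {A : Type*} [AddCommGroup A] [Module F A]
    {M : Type*} [AddCommGroup M] [Module F M]
    (CA : ConfAlg F A) (xB : ℕ → A) (hX : IsCend1x CA xB)
    (B : ConfBimod CA M) (φ : Cochain2 CA B) (hφ : IsCocycle φ) :
    B.lmul 0 (xB 1) (φ.f 2 (xB 1) (xB 1)) =
      B.lmul 1 (xB 1) (φ.f 1 (xB 1) (xB 1)) -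
        B.rmul 1 (φ.f 1 (xB 1) (xB 1)) (xB 1) ∧
    ∀ m : ℕ, 1 < m →
      B.lmul 0 (xB 1) (φ.f (m + 1) (xB 1) (xB 1)) =
        B.lmul 1 (xB 1) (φ.f m (xB 1) (xB 1)) - φ.f m (xB 1) (xB 1) -
          B.rmul m (φ.f 1 (xB 1) (xB 1)) (xB 1) := by
  obtain ⟨-, -, hmul⟩ := hX
  have h11 : CA.mul 1 (xB 1) (xB 1) = xB 1 := by
    rw [hmul 1 1 1 le_rfl le_rfl]; simp
  have hz : ∀ n, 1 < n → CA.mul n (xB 1) (xB 1) = 0 := by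
    intro n hn
    rw [hmul 1 1 n le_rfl le_rfl, Nat.descFactorial_of_lt hn]; simp
  have key : ∀ m : ℕ, 1 ≤ m →
      B.lmul 0 (xB 1) (φ.f (m + 1) (xB 1) (xB 1)) =
        B.lmul 1 (xB 1) (φ.f m (xB 1) (xB 1)) + φ.f 1 (xB 1) (CA.mul m (xB 1) (xB 1))
          - φ.f m (xB 1) (xB 1) - B.rmul m (φ.f 1 (xB 1) (xB 1)) (xB 1) := by
    intro m hm
    have h1 := hφ 1 m (xB 1) (xB 1) (xB 1)
    have h0 := hφ 0 (m + 1) (xB 1) (xB 1) (xB 1)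
    rw [hz (m + 1) (by omega)] at h0
    simp [Finset.sum_range_succ, h11] at h0 h1
    rw [h1, h0]
    abel
  refine ⟨?_, ?_⟩
  · rw [key 1 le_rfl, h11]
    abel
  · intro m hm
    rw [key m hm.le, hz m hm, map_zero, add_zero]
end

section
/- Suppose the endomorphisms Lₙ satisfy L₁Lₘ = L₀L_{m+1} + Lₘ for all m ∈ ℤ₊. Then for every m ≥ 2 there exist scalars c₂, …, c_{m−1} ∈ 𝔽 such that L₁^m = L₁ + Σ_{k=2}^{m−1} c_k L₀^{k−1}L_k + L₀^{m−1}L_m; in particular L₁² = L₁ + L₀L₂ and L₁³ = L₁ + 3L₀L₂ + L₀²L₃. -/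
theorem L1_mul_T {F : Type*} [Field F] {M : Type*} [AddCommGroup M] [Module F M]
    (L : ℕ → Module.End F M)
    (hL : ∀ m : ℕ, L 1 * L m = L 0 * L (m + 1) + L m) (k : ℕ) :
    L 1 * (L 0 ^ k * L (k + 1)) =
      L 0 ^ (k + 1) * L (k + 2) + ((k + 1 : ℕ) : F) • (L 0 ^ k * L (k + 1)) := by
  have h0 : ∀ j : ℕ, L 1 * L 0 ^ j = L 0 ^ j * L 1 + (j : F) • L 0 ^ j := by
    intro j
    induction j with
    | zero => simp
    | succ j ih =>
      have h1 := hL 0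
      rw [pow_succ, ← mul_assoc, ih, add_mul, mul_assoc, h1]
      simp only [zero_add, mul_add, smul_mul_assoc, Nat.cast_succ, add_smul, one_smul, mul_assoc]
      abel
  rw [← mul_assoc, h0, add_mul, mul_assoc, hL (k + 1)]
  simp only [mul_add, smul_mul_assoc, Nat.cast_succ, add_smul, one_smul, pow_succ, mul_assoc]
  abel

theorem L1_pow_stirling {F : Type*} [Field F] {M : Type*} [AddCommGroup M] [Module F M]
    (L : ℕ → Module.End F M)
    (hL : ∀ m : ℕ, L 1 * L m = L 0 * L (m + 1) + L m) (n : ℕ) :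
    L 1 ^ (n + 1) = ∑ k ∈ Finset.range (n + 1),
      ((Nat.stirlingSecond (n + 1) (k + 1) : ℕ) : F) • (L 0 ^ k * L (k + 1)) := by
  induction n with
  | zero => simp [Nat.stirlingSecond]
  | succ n ih =>
    have e : ∀ k, ((Nat.stirlingSecond (n + 1 + 1) (k + 1) : ℕ) : F) • (L 0 ^ k * L (k + 1)) =
        ((Nat.stirlingSecond (n + 1) (k + 1) : ℕ) : F) •
          (((k + 1 : ℕ) : F) • (L 0 ^ k * L (k + 1))) +
        ((Nat.stirlingSecond (n + 1) k : ℕ) : F) • (L 0 ^ k * L (k + 1)) := by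
      intro k
      rw [Nat.stirlingSecond_succ_succ, smul_smul, ← add_smul]
      push_cast
      congr 1
      ring
    simp only [e]
    rw [Finset.sum_add_distrib, Finset.sum_range_succ,
      Finset.sum_range_succ' (fun k => ((Nat.stirlingSecond (n + 1) k : ℕ) : F) • _),
      Nat.stirlingSecond_eq_zero_of_lt (show n + 1 < n + 1 + 1 by omega),
      Nat.stirlingSecond_succ_zero, pow_succ' (L 1), ih, Finset.mul_sum]
    simp only [mul_smul_comm, L1_mul_T L hL, smul_add, Finset.sum_add_distrib, Nat.cast_zero,
      zero_smul, add_zero]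
    abel

/-- Let `M` be a vector space over a field `F` of characteristic zero and `(Lₙ)`
endomorphisms of `M` with `L₁Lₘ = L₀L_{m+1} + Lₘ` for all `m`. Then for every
`m ≥ 2` there are scalars `c₂, …, c_{m−1} ∈ F` such that
`L₁^m = L₁ + Σ_{k=2}^{m−1} c_k L₀^{k−1}L_k + L₀^{m−1}L_m`; in particular
`L₁² = L₁ + L₀L₂` and `L₁³ = L₁ + 3L₀L₂ + L₀²L₃`. -/
theorem L1_pow_expansion {F : Type*} [Field F] [CharZero F]
    {M : Type*} [AddCommGroup M] [Module F M]
    (L : ℕ → Module.End F M)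
    (hL : ∀ m : ℕ, L 1 * L m = L 0 * L (m + 1) + L m) :
    (∀ m : ℕ, 2 ≤ m → ∃ c : ℕ → F,
      L 1 ^ m =
        L 1 + (∑ k ∈ Finset.Icc 2 (m - 1), c k • (L 0 ^ (k - 1) * L k)) +
          L 0 ^ (m - 1) * L m) ∧
    L 1 ^ 2 = L 1 + L 0 * L 2 ∧
    L 1 ^ 3 = L 1 + (3 : F) • (L 0 * L 2) + L 0 ^ 2 * L 3 := by
  refine ⟨?_, ?_, ?_⟩
  · intro m hm
    obtain ⟨n, rfl⟩ : ∃ n, m = n + 2 := ⟨m - 2, by omega⟩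
    refine ⟨fun k => ((Nat.stirlingSecond (n + 2) k : ℕ) : F), ?_⟩
    rw [L1_pow_stirling L hL (n + 1), Finset.sum_range_succ, Finset.sum_range_succ',
      ← Finset.Ico_add_one_right_eq_Icc, Finset.sum_Ico_eq_sum_range,
      Nat.stirlingSecond_self, Nat.stirlingSecond_one_right]
    have e : n + 2 - 1 + 1 - 2 = n := by omega
    rw [e]
    have e2 : ∀ k, 2 + k - 1 = k + 1 := by intro k; omega
    simp only [e2, add_comm 2]
    simp
    abel
  · rw [pow_two, hL 1, add_comm]
  · rw [L1_pow_stirling L hL 2]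
    simp [Finset.sum_range_succ, Nat.stirlingSecond]

    norm_num
end

section
/- For all polynomials B, C ∈ R[x] and all m, n ∈ ℤ₊: B^{(n)} · C^{(m)} = Σ_{s=0}^{n} (−1)^s binom(n,s) (B · C^{(m+s)})^{(n−s)}, where P^{(k)} denotes the k-th iterated formal derivative of the polynomial P. (This identity expresses the associativity axiom (a ∘ₙ b) ∘ₘ c = Σ_{s≥0} (−1)^s binom(n,s) a ∘_{n−s} (b ∘_{m+s} c) for the conformal products A ∘ₙ B = A · B^{(n)} on polynomials, which define the algebra Cend₁.) -/
/-- For polynomials `B, C ∈ R[x]` over a commutative `ℚ`-algebra `R` and all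
`m, n ∈ ℤ₊`: `B⁽ⁿ⁾ · C⁽ᵐ⁾ = Σ_{s=0}^{n} (−1)^s binom(n,s) (B · C⁽ᵐ⁺ˢ⁾)⁽ⁿ⁻ˢ⁾`,
where `P⁽ᵏ⁾` is the `k`-th iterated formal derivative. This is the associativity
axiom `(a ∘ₙ b) ∘ₘ c = Σ_s (−1)^s binom(n,s) a ∘_{n−s} (b ∘_{m+s} c)` for the
conformal products `A ∘ₙ B = A · B⁽ⁿ⁾` defining `Cend₁`. -/
theorem derivative_conformal_assoc {R : Type*} [CommRing R] [Algebra ℚ R]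
    (B C : Polynomial R) (m n : ℕ) :
    (Polynomial.derivative^[n] B) * (Polynomial.derivative^[m] C) =
      ∑ s ∈ Finset.range (n + 1),
        ((-1 : R) ^ s * (n.choose s : R)) •
          Polynomial.derivative^[n - s] (B * Polynomial.derivative^[m + s] C) := by
  induction n generalizing m with
  | zero => simp
  | succ n ih =>
    have key : (Polynomial.derivative^[n+1] B) * (Polynomial.derivative^[m] C) =
        Polynomial.derivative ((Polynomial.derivative^[n] B) * (Polynomial.derivative^[m] C))
        - (Polynomial.derivative^[n] B) * (Polynomial.derivative^[m+1] C) := by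
      rw [Polynomial.derivative_mul, Function.iterate_succ_apply', Function.iterate_succ_apply']
      ring
    rw [key, ih m, ih (m+1)]
    have h1 : Polynomial.derivative (∑ s ∈ Finset.range (n + 1),
        ((-1 : R) ^ s * (n.choose s : R)) •
          Polynomial.derivative^[n - s] (B * Polynomial.derivative^[m + s] C)) =
        ∑ s ∈ Finset.range (n + 1 + 1), ((-1 : R) ^ s * (n.choose s : R)) •
          Polynomial.derivative^[n + 1 - s] (B * Polynomial.derivative^[m + s] C) := by
      rw [Finset.sum_range_succ _ (n+1), Polynomial.derivative_sum]
      simp only [Nat.choose_succ_self, Nat.cast_zero, mul_zero, zero_smul, add_zero]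
      refine Finset.sum_congr rfl fun s hs => ?_
      have hs' : n + 1 - s = (n - s) + 1 := by
        have := Finset.mem_range.mp hs
        omega
      rw [Polynomial.derivative_smul, hs', Function.iterate_succ_apply']
    rw [h1, Finset.sum_range_succ' _ (n+1), Finset.sum_range_succ' _ (n+1), add_sub_right_comm,
      ← Finset.sum_sub_distrib]
    congr 1
    · refine Finset.sum_congr rfl fun s _ => ?_
      rw [show m + 1 + s = m + (s + 1) by omega, show n + 1 - (s + 1) = n - s by omega,
        ← sub_smul, Nat.choose_succ_succ]
      congr 1
      push_cast
      ring
    · simp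
end
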